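/- arXiv:1805.04353 — 13 statements merged into one kernel-verified Lean document; each statement's English description precedes it below -/
import Mathlib

section
/- Let p be a prime number and let v₁,…,v_k ∈ ℤ⁴ with 1 ≤ k ≤ 3 be a p-orthonormal system, i.e. ⟨vᵢ|vᵢ⟩ = p for all 1 ≤ i ≤ k and ⟨vᵢ|vⱼ⟩ = 0 for all 1 ≤ i < j ≤ k. Then there exists v = (x₁,x₂,x₃,x₄) ∈ ℤ⁴ such that ⟨vᵢ|v⟩ = 0 for all 1 ≤ i ≤ k and x₁² + x₂² + x₃² + x₄² = p. -/
open Matrix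

/-- A positive definite integral binary quadratic form of determinant one represents one. -/
lemma exists_binary_form_eq_one (n : ℕ) : ∀ A B C : ℤ, B.natAbs ≤ n → 0 ≤ A →
    A * C - B ^ 2 = 1 → ∃ s t : ℤ, A * s ^ 2 + 2 * B * s * t + C * t ^ 2 = 1 := by
  induction n with
  | zero =>
    intro A B C hB hA h
    obtain rfl : B = 0 := by omega
    have hA1 : A = 1 := Int.eq_one_of_mul_eq_one_right hA (b := C) (by linarith)
    exact ⟨1, 0, by rw [hA1]; ring⟩
  | succ n ih =>
    intro A B C hB hA h
    rcases eq_or_ne B 0 with rfl | hB0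
    · exact ih A 0 C (by simp) hA h
    have hA0 : 0 < A := lt_of_le_of_ne hA fun h0 => by subst h0; nlinarith [sq_nonneg B]
    have hC0 : 0 < C := by
      by_contra hC
      nlinarith [sq_nonneg B, mul_nonneg hA (neg_nonneg.mpr (not_lt.mp hC))]
    have hmin : A ≤ |B| ∨ C ≤ |B| := by
      by_contra! hlt
      have hBpos : 0 < |B| := abs_pos.mpr hB0
      nlinarith [mul_le_mul (Int.add_one_le_of_lt hlt.1) (Int.add_one_le_of_lt hlt.2)
        (by positivity) hA, sq_abs B]
    rcases lt_or_gt_of_ne hB0 with hneg | hpos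
    · rw [abs_of_neg hneg] at hmin
      rcases hmin with hle | hle
      · obtain ⟨s, t, hst⟩ := ih A (B + A) (C + 2 * B + A) (by omega) hA (by linarith)
        exact ⟨s + t, t, by linarith⟩
      · obtain ⟨s, t, hst⟩ := ih (A + 2 * B + C) (B + C) C (by omega) (by nlinarith)
          (by linarith)
        exact ⟨s, s + t, by linarith⟩
    · rw [abs_of_pos hpos] at hmin
      rcases hmin with hle | hle
      · obtain ⟨s, t, hst⟩ := ih A (B - A) (C - 2 * B + A) (by omega) hA (by linarith)
        exact ⟨s - t, t, by linarith⟩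
      · obtain ⟨s, t, hst⟩ := ih (A - 2 * B + C) (B - C) C (by omega) (by nlinarith)
          (by linarith)
        exact ⟨s, t - s, by linarith⟩

/-- The square of a determinant is the Gram determinant of its rows. -/
lemma det_sq_eq_gram {R : Type*} [CommRing R] (a b c d : Fin 4 → R) :
    (Matrix.of ![a, b, c, d]).det ^ 2 =
      (!![a ⬝ᵥ a, a ⬝ᵥ b, a ⬝ᵥ c, a ⬝ᵥ d; b ⬝ᵥ a, b ⬝ᵥ b, b ⬝ᵥ c, b ⬝ᵥ d;
          c ⬝ᵥ a, c ⬝ᵥ b, c ⬝ᵥ c, c ⬝ᵥ d; d ⬝ᵥ a, d ⬝ᵥ b, d ⬝ᵥ c, d ⬝ᵥ d]).det := by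
  have key : (Matrix.of ![a, b, c, d]) * (Matrix.of ![a, b, c, d])ᵀ =
      !![a ⬝ᵥ a, a ⬝ᵥ b, a ⬝ᵥ c, a ⬝ᵥ d; b ⬝ᵥ a, b ⬝ᵥ b, b ⬝ᵥ c, b ⬝ᵥ d;
          c ⬝ᵥ a, c ⬝ᵥ b, c ⬝ᵥ c, c ⬝ᵥ d; d ⬝ᵥ a, d ⬝ᵥ b, d ⬝ᵥ c, d ⬝ᵥ d] := by
    ext i j
    fin_cases i <;> fin_cases j <;> rfl
  rw [← key, det_mul, det_transpose, sq]

/-- Three pairwise orthogonal vectors of norm `p` in `ℤ⁴` extend to four. -/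
lemma exists_orthogonal_of_three {p : ℤ} (hp : p ≠ 0) {a b c : Fin 4 → ℤ}
    (haa : a ⬝ᵥ a = p) (hbb : b ⬝ᵥ b = p) (hcc : c ⬝ᵥ c = p)
    (hab : a ⬝ᵥ b = 0) (hac : a ⬝ᵥ c = 0) (hbc : b ⬝ᵥ c = 0) :
    ∃ w : Fin 4 → ℤ, a ⬝ᵥ w = 0 ∧ b ⬝ᵥ w = 0 ∧ c ⬝ᵥ w = 0 ∧ w ⬝ᵥ w = p := by
  have hsq (i : Fin 4) : (Matrix.of ![a, b, c, Pi.single i 1]).det ^ 2 =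
      p ^ 2 * (p - a i ^ 2 - b i ^ 2 - c i ^ 2) := by
    rw [det_sq_eq_gram, haa, hbb, hcc, dotProduct_comm b a, dotProduct_comm c a,
      dotProduct_comm c b, hab, hac, hbc]
    simp [det_succ_row_zero, Fin.sum_univ_succ, Fin.succAbove]
    ring
  have hdvd (i : Fin 4) : ∃ z, (Matrix.of ![a, b, c, Pi.single i 1]).det = p * z :=
    (Int.pow_dvd_pow_iff two_ne_zero).mp ⟨_, hsq i⟩
  choose w hw using hdvd
  have hexp (u : Fin 4 → ℤ) : p * (u ⬝ᵥ w) = (Matrix.of ![a, b, c, u]).det := by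
    have h0 := hw 0
    have h1 := hw 1
    have h2 := hw 2
    have h3 := hw 3
    simp only [dotProduct, Fin.sum_univ_four]
    have : p * (u 0 * w 0 + u 1 * w 1 + u 2 * w 2 + u 3 * w 3) =
      u 0 * (p * w 0) + u 1 * (p * w 1) + u 2 * (p * w 2) + u 3 * (p * w 3) := by ring
    rw [this, ← h0, ← h1, ← h2, ← h3]
    simp [det_succ_row_zero, Fin.sum_univ_succ, Fin.succAbove, Pi.single_apply]
    ring
  have horth (u : Fin 4 → ℤ) (hu : (Matrix.of ![a, b, c, u]).det = 0) : u ⬝ᵥ w = 0 :=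
    (mul_eq_zero.mp ((hexp u).trans hu)).resolve_left hp
  refine ⟨w, horth a ?_, horth b ?_, horth c ?_, ?_⟩
  · exact det_zero_of_row_eq (i := 0) (j := 3) (by decide) rfl
  · exact det_zero_of_row_eq (i := 1) (j := 3) (by decide) rfl
  · exact det_zero_of_row_eq (i := 2) (j := 3) (by decide) rfl
  · have hw2 (i : Fin 4) : w i ^ 2 = p - a i ^ 2 - b i ^ 2 - c i ^ 2 := by
      have h := hsq i
      rw [hw i, mul_pow] at h
      exact mul_left_cancel₀ (pow_ne_zero 2 hp) h
    simp only [dotProduct, Fin.sum_univ_four] at haa hbb hcc ⊢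
    linarith [hw2 0, hw2 1, hw2 2, hw2 3]

/-- The orthogonal complement of two independent orthogonal vectors in `ℤ⁴` has a basis of two
vectors, and the dual basis extends to functionals on `ℤ⁴`. -/
lemma exists_orthogonal_basis {p : ℤ} (hp : p ≠ 0) {a b : Fin 4 → ℤ}
    (haa : a ⬝ᵥ a = p) (hbb : b ⬝ᵥ b = p) (hab : a ⬝ᵥ b = 0) :
    ∃ e f x y : Fin 4 → ℤ, a ⬝ᵥ e = 0 ∧ b ⬝ᵥ e = 0 ∧ a ⬝ᵥ f = 0 ∧ b ⬝ᵥ f = 0 ∧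
      x ⬝ᵥ e = 1 ∧ x ⬝ᵥ f = 0 ∧ y ⬝ᵥ e = 0 ∧ y ⬝ᵥ f = 1 ∧
      ∀ z, a ⬝ᵥ z = 0 → b ⬝ᵥ z = 0 → z = (x ⬝ᵥ z) • e + (y ⬝ᵥ z) • f := by
  let φ : (Fin 4 → ℤ) →ₗ[ℤ] (Fin 2 → ℤ) := (Matrix.of ![a, b]).mulVecLin
  have hφ (z : Fin 4 → ℤ) : φ z = ![a ⬝ᵥ z, b ⬝ᵥ z] := by
    ext i; fin_cases i <;> rfl
  have hker (z : Fin 4 → ℤ) : z ∈ LinearMap.ker φ ↔ a ⬝ᵥ z = 0 ∧ b ⬝ᵥ z = 0 := by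
    rw [LinearMap.mem_ker, hφ]
    simp
  have hrange : Module.finrank ℤ (LinearMap.range φ) = 2 := by
    apply le_antisymm
    · simpa using Submodule.finrank_le (LinearMap.range φ)
    · let ψ : (Fin 2 → ℤ) →ₗ[ℤ] (Fin 4 → ℤ) := (Matrix.of ![a, b]).vecMulLinear
      have hψ (s : Fin 2 → ℤ) : φ (ψ s) = p • s := by
        have : ψ s = s 0 • a + s 1 • b := by
          ext i; simp [ψ, vecMul, dotProduct, Fin.sum_univ_two]
        rw [this, hφ]
        ext i
        fin_cases i <;> simp [-zsmul_eq_mul, haa, hbb, hab, dotProduct_comm b a, mul_comm]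
      have hinj : Function.Injective (φ.rangeRestrict ∘ₗ ψ) := by
        intro s t hst
        have h2 : φ (ψ s) = φ (ψ t) := congrArg Subtype.val hst
        rw [hψ, hψ] at h2
        exact smul_right_injective _ hp h2
      simpa using LinearMap.finrank_le_finrank_of_injective hinj
  have hfin : Module.finrank ℤ (LinearMap.ker φ) = 2 := by
    have h := (LinearMap.ker φ).finrank_quotient_add_finrank
    rw [φ.quotKerEquivRange.finrank_eq, hrange, Module.finrank_fintype_fun_eq_card,
      Fintype.card_fin] at h
    omega
  let β := Module.finBasisOfFinrankEq ℤ (LinearMap.ker φ) hfin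
  obtain ⟨σ, hσ⟩ := Module.projective_lifting_property φ.rangeRestrict LinearMap.id
    φ.surjective_rangeRestrict
  have hσ' (r : LinearMap.range φ) : φ (σ r) = r :=
    congrArg Subtype.val (LinearMap.congr_fun hσ r)
  let π : (Fin 4 → ℤ) →ₗ[ℤ] LinearMap.ker φ :=
    (LinearMap.id - σ ∘ₗ φ.rangeRestrict).codRestrict _ fun z => by
      simp [hσ']
  have hπ (z : LinearMap.ker φ) : π z = z := by
    have h0 : φ.rangeRestrict z = 0 := Subtype.ext z.2
    apply Subtype.ext
    simp [π, h0]
  have hfun (g : (Fin 4 → ℤ) →ₗ[ℤ] ℤ) (z : Fin 4 → ℤ) :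
      (fun i => g (Pi.single i 1)) ⬝ᵥ z = g z := by
    rw [LinearMap.pi_apply_eq_sum_univ g z]
    simp only [dotProduct, smul_eq_mul]
    refine Finset.sum_congr rfl fun i _ => ?_
    rw [mul_comm]
    congr 2
    ext j
    simp [Pi.single_apply, eq_comm]
  refine ⟨β 0, β 1, fun i => (β.coord 0 ∘ₗ π) (Pi.single i 1),
    fun i => (β.coord 1 ∘ₗ π) (Pi.single i 1), ((hker _).mp (β 0).2).1, ((hker _).mp (β 0).2).2,
    ((hker _).mp (β 1).2).1, ((hker _).mp (β 1).2).2, ?_, ?_, ?_, ?_, ?_⟩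
  · rw [hfun]; simp [hπ]
  · rw [hfun]; simp [hπ]
  · rw [hfun]; simp [hπ]
  · rw [hfun]; simp [hπ]
  · intro z hza hzb
    have h := β.sum_repr ⟨z, (hker z).mpr ⟨hza, hzb⟩⟩
    have hz := hπ ⟨z, (hker z).mpr ⟨hza, hzb⟩⟩
    rw [hfun, hfun]
    simp only [LinearMap.comp_apply, Module.Basis.coord_apply]
    simp only at hz
    rw [hz]
    have h' := congrArg Subtype.val h
    simpa only [Fin.sum_univ_two, Submodule.coe_add, Submodule.coe_smul] using h'.symm

/-- An integer vector of norm one has exactly one nonzero coordinate. -/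
lemma exists_single_of_dotProduct_self_eq_one {e : Fin 4 → ℤ} (he : e ⬝ᵥ e = 1) :
    ∃ i, e i ≠ 0 ∧ ∀ j, j ≠ i → e j = 0 := by
  have hne : ∃ i, e i ≠ 0 := by
    by_contra! h
    simp [dotProduct, h] at he
  obtain ⟨i, hi⟩ := hne
  refine ⟨i, hi, fun j hj => ?_⟩
  by_contra hj0
  have hsum : e i * e i + e j * e j ≤ e ⬝ᵥ e := by
    rw [← Finset.sum_pair (f := fun t => e t * e t) hj.symm]
    exact Finset.sum_le_univ_sum_of_nonneg fun t => mul_self_nonneg _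
  have h1 : 0 < e i * e i := mul_self_pos.mpr hi
  have h2 : 0 < e j * e j := mul_self_pos.mpr hj0
  omega

/-- If two orthonormal integer vectors are orthogonal to `a`, the norm of `a` is a sum of two
squares. -/
lemma exists_sq_add_sq_of_orthonormal {a e f : Fin 4 → ℤ} (hee : e ⬝ᵥ e = 1) (hff : f ⬝ᵥ f = 1)
    (hef : e ⬝ᵥ f = 0) (hae : a ⬝ᵥ e = 0) (haf : a ⬝ᵥ f = 0) :
    ∃ s t : ℤ, s ^ 2 + t ^ 2 = a ⬝ᵥ a := by
  obtain ⟨i, hi, hi'⟩ := exists_single_of_dotProduct_self_eq_one hee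
  obtain ⟨j, hj, hj'⟩ := exists_single_of_dotProduct_self_eq_one hff
  have hai : a i = 0 := by
    rw [dotProduct, Finset.sum_eq_single i (fun t _ ht => by simp [hi' t ht]) (by simp)] at hae
    exact (mul_eq_zero.mp hae).resolve_right hi
  have haj : a j = 0 := by
    rw [dotProduct, Finset.sum_eq_single j (fun t _ ht => by simp [hj' t ht]) (by simp)] at haf
    exact (mul_eq_zero.mp haf).resolve_right hj
  have hij : i ≠ j := by
    rintro rfl
    rw [dotProduct, Finset.sum_eq_single i (fun t _ ht => by simp [hi' t ht]) (by simp)] at hef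
    exact mul_ne_zero hi hj hef
  have hcard : ({i, j}ᶜ : Finset (Fin 4)).card = 2 := by
    rw [Finset.card_compl, Finset.card_pair hij]; rfl
  obtain ⟨k, l, hkl, hset⟩ := Finset.card_eq_two.mp hcard
  refine ⟨a k, a l, ?_⟩
  rw [dotProduct, ← Finset.sum_add_sum_compl {i, j}, hset, Finset.sum_pair hij,
    Finset.sum_pair hkl, hai, haj]
  ring

/-- Two orthogonal vectors of prime norm `p` in `ℤ⁴` are orthogonal to a vector of norm `p`. -/
lemma exists_orthogonal_of_two {p : ℕ} (hp : p.Prime) {a b : Fin 4 → ℤ}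
    (haa : a ⬝ᵥ a = p) (hbb : b ⬝ᵥ b = p) (hab : a ⬝ᵥ b = 0) :
    ∃ w : Fin 4 → ℤ, a ⬝ᵥ w = 0 ∧ b ⬝ᵥ w = 0 ∧ w ⬝ᵥ w = p := by
  have hp0 : (p : ℤ) ≠ 0 := by exact_mod_cast hp.ne_zero
  have hppos : (0 : ℤ) < p := by exact_mod_cast hp.pos
  obtain ⟨e, f, x, y, hae, hbe, haf, hbf, hxe, hxf, hye, hyf, hspan⟩ :=
    exists_orthogonal_basis hp0 haa hbb hab
  have hgram : (Matrix.of ![a, b, e, f]).det ^ 2 =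
      (p : ℤ) ^ 2 * ((e ⬝ᵥ e) * (f ⬝ᵥ f) - (e ⬝ᵥ f) ^ 2) := by
    rw [det_sq_eq_gram, dotProduct_comm b a, dotProduct_comm e a, dotProduct_comm e b,
      dotProduct_comm f a, dotProduct_comm f b, dotProduct_comm f e, haa, hbb, hab, hae, haf,
      hbe, hbf]
    simp [det_succ_row_zero, Fin.sum_univ_succ, Fin.succAbove]
    ring
  -- `G` is `p` times the orthogonal projection onto the complement of `a` and `b`.
  let G : (Fin 4 → ℤ) → (Fin 4 → ℤ) := fun z => (p : ℤ) • z - (a ⬝ᵥ z) • a - (b ⬝ᵥ z) • b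
  have haG (z : Fin 4 → ℤ) : a ⬝ᵥ G z = 0 := by
    simp only [G, dotProduct_sub, dotProduct_smul, smul_eq_mul, haa, hab]; ring
  have hbG (z : Fin 4 → ℤ) : b ⬝ᵥ G z = 0 := by
    simp only [G, dotProduct_sub, dotProduct_smul, smul_eq_mul, hbb, dotProduct_comm b a, hab]; ring
  have hperp (u z : Fin 4 → ℤ) (h1 : a ⬝ᵥ u = 0) (h2 : b ⬝ᵥ u = 0) :
      u ⬝ᵥ G z = p * (u ⬝ᵥ z) := by
    simp only [G, dotProduct_sub, dotProduct_smul, smul_eq_mul, dotProduct_comm u a,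
      dotProduct_comm u b, h1, h2]
    ring
  have hsymm : y ⬝ᵥ G x = x ⬝ᵥ G y := by
    simp only [G, dotProduct_sub, dotProduct_smul, smul_eq_mul, dotProduct_comm y x,
      dotProduct_comm y a, dotProduct_comm y b, dotProduct_comm x a, dotProduct_comm x b]
    ring
  have hGx := hspan (G x) (haG x) (hbG x)
  have hGy := hspan (G y) (haG y) (hbG y)
  rw [hsymm] at hGx
  have hex := hperp e x hae hbe
  have hfx := hperp f x haf hbf
  have hey := hperp e y hae hbe
  have hfy := hperp f y haf hbf
  have hxx := hperp (G x) x (haG x) (hbG x)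
  have hxy := hperp (G x) y (haG x) (hbG x)
  have hyy := hperp (G y) y (haG y) (hbG y)
  rw [dotProduct_comm (G x) x] at hxx
  rw [dotProduct_comm (G x) y, hsymm] at hxy
  rw [dotProduct_comm (G y) y] at hyy
  rw [hGx, dotProduct_comm e x, hxe] at hex
  rw [hGx, dotProduct_comm f x, hxf] at hfx
  rw [hGy, dotProduct_comm e y, hye] at hey
  rw [hGy, dotProduct_comm f y, hyf] at hfy
  simp only [dotProduct_add, dotProduct_smul, smul_eq_mul, dotProduct_comm f e] at hex hfx hey hfy
  have haGx := haG x
  have hbGx := hbG x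
  have haGy := haG y
  have hbGy := hbG y
  generalize G x = X at *
  generalize G y = Y at *
  generalize hl : x ⬝ᵥ X = l at *
  generalize hm : x ⬝ᵥ Y = m at *
  generalize hn : y ⬝ᵥ Y = n at *
  have hA : 0 ≤ e ⬝ᵥ e := Finset.sum_nonneg fun t _ => mul_self_nonneg _
  have hX : 0 ≤ X ⬝ᵥ X := Finset.sum_nonneg fun t _ => mul_self_nonneg _
  have hl0 : 0 ≤ l := by
    rw [hxx] at hX
    exact nonneg_of_mul_nonneg_right hX hppos
  generalize hAe : e ⬝ᵥ e = A at *
  generalize hBe : e ⬝ᵥ f = B at *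
  generalize hCe : f ⬝ᵥ f = C at *
  have hprod : (A * C - B ^ 2) * (l * n - m ^ 2) = (p : ℤ) ^ 2 := by
    linear_combination (m * B + n * C) * hex - (m * A + n * B) * hfx + p * hfy
  have hD : 0 ≤ A * C - B ^ 2 := by
    have := sq_nonneg (Matrix.of ![a, b, e, f]).det
    rw [hgram] at this
    exact nonneg_of_mul_nonneg_right this (by positivity)
  have hDdvd : (A * C - B ^ 2).natAbs ∣ p ^ 2 := by
    have := Int.natAbs_dvd_natAbs.mpr (Dvd.intro _ hprod)
    simpa [Int.natAbs_pow] using this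
  obtain ⟨r, hr, hDr⟩ := (Nat.dvd_prime_pow hp).mp hDdvd
  have hDr' : A * C - B ^ 2 = (p : ℤ) ^ r := by
    rw [← Int.natAbs_of_nonneg hD, hDr]; push_cast; rfl
  interval_cases r
  · rw [pow_zero] at hDr'
    obtain ⟨s, t, hst⟩ := exists_binary_form_eq_one _ A B C le_rfl hA hDr'
    -- The second vector completes `s • e + t • f` to an orthonormal basis.
    have h1 : (s • e + t • f) ⬝ᵥ (s • e + t • f) = 1 := by
      simp [-zsmul_eq_mul, dotProduct_comm f e, hAe, hBe, hCe]
      linarith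
    obtain ⟨u, v, huv⟩ := exists_sq_add_sq_of_orthonormal (a := a) (e := s • e + t • f)
      (f := (-(B * s + C * t)) • e + (A * s + B * t) • f) h1
      (by
        simp [-zsmul_eq_mul, dotProduct_comm f e, hAe, hBe, hCe]
        linear_combination (A * s ^ 2 + 2 * B * s * t + C * t ^ 2) * hDr' + hst)
      (by
        simp [-zsmul_eq_mul, dotProduct_comm f e, hAe, hBe, hCe]
        ring)
      (by simp [-zsmul_eq_mul, hae, haf]) (by simp [-zsmul_eq_mul, hae, haf])
    refine ⟨u • (s • e + t • f) + v • ((-(B * s + C * t)) • e + (A * s + B * t) • f),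
      by simp [-zsmul_eq_mul, hae, haf], by simp [-zsmul_eq_mul, hbe, hbf], ?_⟩
    rw [← haa, ← huv]
    simp [-zsmul_eq_mul, dotProduct_comm f e, hAe, hBe, hCe]
    linear_combination
      (v ^ 2 * (A * s ^ 2 + 2 * B * s * t + C * t ^ 2)) * hDr' + (u ^ 2 + v ^ 2) * hst
  · exfalso
    rw [hDr', pow_one, ← pow_succ] at hgram
    have hpp : Prime (p : ℤ) := Nat.prime_iff_prime_int.mp hp
    obtain ⟨q, hq⟩ : (p : ℤ) ∣ (Matrix.of ![a, b, e, f]).det :=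
      hpp.dvd_of_dvd_pow ⟨(p : ℤ) ^ 2, by rw [hgram]; ring⟩
    rw [hq, mul_pow] at hgram
    have hqp : q ^ 2 = p := mul_left_cancel₀ (pow_ne_zero 2 hp0) (by rw [hgram]; ring)
    exact hpp.irreducible.not_isSquare ⟨q, by rw [← hqp, sq]⟩
  · have hdual : l * n - m ^ 2 = 1 := by
      rw [hDr'] at hprod
      exact mul_left_cancel₀ (pow_ne_zero 2 hp0) (by rw [hprod, mul_one])
    obtain ⟨s, t, hst⟩ := exists_binary_form_eq_one _ l m n le_rfl hl0 hdual
    refine ⟨s • X + t • Y, by simp [-zsmul_eq_mul, haGx, haGy], by simp [-zsmul_eq_mul, hbGx, hbGy], ?_⟩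
    simp [-zsmul_eq_mul, dotProduct_comm Y X, hxx, hxy, hyy]
    linear_combination (p : ℤ) * hst

/-- Extended Lagrange four-square theorem: a p-orthonormal system of k vectors
(1 ≤ k ≤ 3) in ℤ⁴ admits an orthogonal vector of norm p. -/
theorem extended_lagrange_four_square
    (p : ℕ) (hp : p.Prime) (k : ℕ) (hk1 : 1 ≤ k) (hk3 : k ≤ 3)
    (v : Fin k → (Fin 4 → ℤ))
    (hnorm : ∀ i, ∑ t, v i t * v i t = (p : ℤ))
    (horth : ∀ i j, i ≠ j → ∑ t, v i t * v j t = 0) :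
    ∃ w : Fin 4 → ℤ, (∀ i, ∑ t, v i t * w t = 0) ∧
      w 0 ^ 2 + w 1 ^ 2 + w 2 ^ 2 + w 3 ^ 2 = (p : ℤ) := by
  suffices h : ∃ w : Fin 4 → ℤ, (∀ i, v i ⬝ᵥ w = 0) ∧ w ⬝ᵥ w = (p : ℤ) by
    obtain ⟨w, hw, hww⟩ := h
    refine ⟨w, hw, ?_⟩
    rw [← hww, dotProduct, Fin.sum_univ_four]
    ring
  interval_cases k
  · refine ⟨![-v 0 1, v 0 0, -v 0 3, v 0 2], fun i => ?_, ?_⟩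
    · rw [Subsingleton.elim i 0]
      simp [dotProduct, Fin.sum_univ_four]
      ring
    · rw [← hnorm 0]
      simp [dotProduct, Fin.sum_univ_four]
      ring
  · obtain ⟨w, h0, h1, hw⟩ := exists_orthogonal_of_two hp (hnorm 0) (hnorm 1)
      (horth 0 1 (by decide))
    exact ⟨w, Fin.forall_fin_two.mpr ⟨h0, h1⟩, hw⟩
  · obtain ⟨w, h0, h1, h2, hw⟩ := exists_orthogonal_of_three (by exact_mod_cast hp.ne_zero)
      (hnorm 0) (hnorm 1) (hnorm 2) (horth 0 1 (by decide)) (horth 0 2 (by decide))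
      (horth 1 2 (by decide))
    refine ⟨w, fun i => ?_, hw⟩
    fin_cases i
    exacts [h0, h1, h2]
end

section
/- Let p be a prime number and let S = {v₁,…,v_k} ⊆ ℤ⁴ with 1 ≤ k ≤ 3 be a p-orthonormal system. Then S can be extended to a p-orthonormal base: there exist vectors v_{k+1},…,v₄ ∈ ℤ⁴ such that v₁,…,v₄ satisfy N(vᵢ) = p for all 1 ≤ i ≤ 4 and ⟨vᵢ|vⱼ⟩ = 0 for all 1 ≤ i < j ≤ 4. -/
/-- A `3 × 3` minor of a `3 × 4` integer matrix whose rows are pairwise orthogonal of norm `p`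
is divisible by `p`, and the quotient completes the deleted column to norm `p`. -/
lemma exists_minor_eq_mul {p x₀ x₁ x₂ x₃ y₀ y₁ y₂ y₃ z₀ z₁ z₂ z₃ : ℤ} (hp : p ≠ 0)
    (hxx : x₀ * x₀ + x₁ * x₁ + x₂ * x₂ + x₃ * x₃ = p)
    (hyy : y₀ * y₀ + y₁ * y₁ + y₂ * y₂ + y₃ * y₃ = p)
    (hzz : z₀ * z₀ + z₁ * z₁ + z₂ * z₂ + z₃ * z₃ = p)
    (hxy : x₀ * y₀ + x₁ * y₁ + x₂ * y₂ + x₃ * y₃ = 0)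
    (hxz : x₀ * z₀ + x₁ * z₁ + x₂ * z₂ + x₃ * z₃ = 0)
    (hyz : y₀ * z₀ + y₁ * z₁ + y₂ * z₂ + y₃ * z₃ = 0) :
    ∃ t : ℤ, x₁ * (y₂ * z₃ - y₃ * z₂) - x₂ * (y₁ * z₃ - y₃ * z₁) + x₃ * (y₁ * z₂ - y₂ * z₁)
        = p * t ∧ t * t = p - x₀ * x₀ - y₀ * y₀ - z₀ * z₀ := by
  have gram : ∀ A B C D E F : ℤ, x₁ * x₁ + x₂ * x₂ + x₃ * x₃ = A →
      y₁ * y₁ + y₂ * y₂ + y₃ * y₃ = B → z₁ * z₁ + z₂ * z₂ + z₃ * z₃ = C →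
      x₁ * y₁ + x₂ * y₂ + x₃ * y₃ = D → x₁ * z₁ + x₂ * z₂ + x₃ * z₃ = E →
      y₁ * z₁ + y₂ * z₂ + y₃ * z₃ = F →
      (x₁ * (y₂ * z₃ - y₃ * z₂) - x₂ * (y₁ * z₃ - y₃ * z₁) + x₃ * (y₁ * z₂ - y₂ * z₁)) ^ 2
        = A * B * C + 2 * D * E * F - A * F ^ 2 - B * E ^ 2 - C * D ^ 2 := by
    rintro A B C D E F rfl rfl rfl rfl rfl rfl
    ring
  have hsq := gram (p - x₀ * x₀) (p - y₀ * y₀) (p - z₀ * z₀) (-(x₀ * y₀)) (-(x₀ * z₀))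
    (-(y₀ * z₀)) (by linarith) (by linarith) (by linarith) (by linarith) (by linarith)
    (by linarith)
  obtain ⟨t, ht⟩ := (Int.pow_dvd_pow_iff (two_ne_zero)).1
    (⟨p - x₀ * x₀ - y₀ * y₀ - z₀ * z₀, by rw [hsq]; ring⟩ : p ^ 2 ∣ _)
  refine ⟨t, ht, ?_⟩
  rw [ht] at hsq
  apply mul_left_cancel₀ (pow_ne_zero 2 hp)
  linear_combination hsq

/-- Three pairwise orthogonal vectors of norm `p` in `ℤ⁴` admit a fourth one. -/
lemma exists_orthogonal_to_three {p : ℤ} (hp : p ≠ 0) {x y z : Fin 4 → ℤ}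
    (hxx : ∑ t, x t * x t = p) (hyy : ∑ t, y t * y t = p) (hzz : ∑ t, z t * z t = p)
    (hxy : ∑ t, x t * y t = 0) (hxz : ∑ t, x t * z t = 0) (hyz : ∑ t, y t * z t = 0) :
    ∃ w : Fin 4 → ℤ, ∑ t, w t * w t = p ∧ ∑ t, x t * w t = 0 ∧ ∑ t, y t * w t = 0 ∧
      ∑ t, z t * w t = 0 := by
  simp only [Fin.sum_univ_four] at *
  obtain ⟨t₀, h₀, q₀⟩ := exists_minor_eq_mul hp hxx hyy hzz hxy hxz hyz
  obtain ⟨t₁, h₁, q₁⟩ := exists_minor_eq_mul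
    (x₀ := x 1) (x₁ := x 0) (x₂ := x 2) (x₃ := x 3) (y₀ := y 1) (y₁ := y 0) (y₂ := y 2)
    (y₃ := y 3) (z₀ := z 1) (z₁ := z 0) (z₂ := z 2) (z₃ := z 3) hp (by linarith) (by linarith)
    (by linarith) (by linarith) (by linarith) (by linarith)
  obtain ⟨t₂, h₂, q₂⟩ := exists_minor_eq_mul
    (x₀ := x 2) (x₁ := x 0) (x₂ := x 1) (x₃ := x 3) (y₀ := y 2) (y₁ := y 0) (y₂ := y 1)
    (y₃ := y 3) (z₀ := z 2) (z₁ := z 0) (z₂ := z 1) (z₃ := z 3) hp (by linarith) (by linarith)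
    (by linarith) (by linarith) (by linarith) (by linarith)
  obtain ⟨t₃, h₃, q₃⟩ := exists_minor_eq_mul
    (x₀ := x 3) (x₁ := x 0) (x₂ := x 1) (x₃ := x 2) (y₀ := y 3) (y₁ := y 0) (y₂ := y 1)
    (y₃ := y 2) (z₀ := z 3) (z₁ := z 0) (z₂ := z 1) (z₃ := z 2) hp (by linarith) (by linarith)
    (by linarith) (by linarith) (by linarith) (by linarith)
  refine ⟨![t₀, -t₁, t₂, -t₃], ?_, ?_, ?_, ?_⟩ <;> simp
  · linarith
  · apply mul_left_cancel₀ hp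
    linear_combination -x 0 * h₀ + x 1 * h₁ - x 2 * h₂ + x 3 * h₃
  · apply mul_left_cancel₀ hp
    linear_combination -y 0 * h₀ + y 1 * h₁ - y 2 * h₂ + y 3 * h₃
  · apply mul_left_cancel₀ hp
    linear_combination -z 0 * h₀ + z 1 * h₁ - z 2 * h₂ + z 3 * h₃

/-- If `n` divides every product `h j * star (h k)`, then `n` divides the norm of a greatest
common divisor of the entries of `h`. -/
lemma GaussianInt.exists_content {ι : Type*} [Fintype ι] (h : ι → GaussianInt) (n : ℤ)
    (hdvd : ∀ j k, (n : GaussianInt) ∣ h j * star (h k)) :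
    ∃ (d : GaussianInt) (z : ι → GaussianInt), (∀ j, h j = d * z j) ∧ n ∣ d.norm := by
  obtain ⟨d, hd⟩ := IsPrincipalIdealRing.principal (Ideal.span (Set.range h))
  have hmem : ∀ j, ∃ z, h j = d * z := fun j => by
    have : h j ∈ Ideal.span {d} := by
      rw [← Ideal.submodule_span_eq, ← hd]
      exact Ideal.subset_span ⟨j, rfl⟩
    exact Ideal.mem_span_singleton.1 this
  choose z hz using hmem
  refine ⟨d, z, hz, ?_⟩
  have hd' : d ∈ Ideal.span (Set.range h) := by
    rw [hd]
    exact Submodule.mem_span_singleton_self d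
  obtain ⟨s, hs⟩ := Ideal.mem_span_range_iff_exists_fun.1 hd'
  rw [← Zsqrtd.intCast_dvd_intCast (d := -1), Zsqrtd.norm_eq_mul_conj]
  nth_rewrite 1 [← hs]
  rw [← hs, star_sum, Finset.sum_mul_sum]
  refine Finset.dvd_sum fun j _ => Finset.dvd_sum fun k _ => ?_
  rw [star_mul]
  convert Dvd.dvd.mul_left (hdvd j k) (s j * star (s k)) using 1
  ring

/-- The orthogonal complement of two orthogonal vectors `a`, `b` of norm `p` in `ℤ⁴` contains the
real part `x` and the imaginary part `y` of an isotropic Gaussian vector `z` for which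
`p - aaᵀ - bbᵀ` is the real part of an integer multiple of `zz*`. -/
lemma exists_isotropic_of_ne {p : ℤ} {a b : Fin 4 → ℤ}
    (haa : ∑ t, a t * a t = p) (hbb : ∑ t, b t * b t = p)
    (hab : ∑ t, a t * b t = 0) (hn : p - a 0 * a 0 - b 0 * b 0 ≠ 0) :
    ∃ (m : ℤ) (x y : Fin 4 → ℤ), ∑ t, x t * x t = ∑ t, y t * y t ∧ ∑ t, x t * y t = 0 ∧
      ∑ t, a t * x t = 0 ∧ ∑ t, a t * y t = 0 ∧ ∑ t, b t * x t = 0 ∧ ∑ t, b t * y t = 0 ∧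
      ∀ t, p - a t * a t - b t * b t = m * (x t * x t + y t * y t) := by
  simp only [Fin.sum_univ_four] at haa hbb hab
  set n : ℤ := p - a 0 * a 0 - b 0 * b 0 with hndef
  let s (j k : Fin 4) : ℤ := a j * a k + b j * b k
  let w (j k : Fin 4) : ℤ := a j * b k - a k * b j
  -- The first column of `H = G + iΩ`, with `G = p - aaᵀ - bbᵀ` and `Ω` the matrix of dual
  -- Plücker coordinates of `a ∧ b`; the Hermitian matrix `H` has rank one.
  let h : Fin 4 → GaussianInt := ![⟨n, 0⟩, ⟨-s 0 1, w 2 3⟩, ⟨-s 0 2, w 3 1⟩, ⟨-s 0 3, w 1 2⟩]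
  let H : Fin 4 → Fin 4 → GaussianInt :=
    ![![⟨n, 0⟩, ⟨-s 0 1, -w 2 3⟩, ⟨-s 0 2, -w 3 1⟩, ⟨-s 0 3, -w 1 2⟩],
      ![⟨-s 0 1, w 2 3⟩, ⟨p - s 1 1, 0⟩, ⟨-s 1 2, -w 0 3⟩, ⟨-s 1 3, w 0 2⟩],
      ![⟨-s 0 2, w 3 1⟩, ⟨-s 1 2, w 0 3⟩, ⟨p - s 2 2, 0⟩, ⟨-s 2 3, -w 0 1⟩],
      ![⟨-s 0 3, w 1 2⟩, ⟨-s 1 3, -w 0 2⟩, ⟨-s 2 3, w 0 1⟩, ⟨p - s 3 3, 0⟩]]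
  have hH : ∀ j k, h j * star (h k) = n * H j k := by
    intro j k
    fin_cases j <;> fin_cases k <;> ext <;> simp [h, H, s, w] <;> grind
  have hsq : ∑ j, h j * h j = 0 := by
    ext <;> simp [h, s, w, Fin.sum_univ_four] <;> grind
  have hah : ∑ j, (a j : GaussianInt) * h j = 0 := by
    ext <;> simp [h, s, w, Fin.sum_univ_four] <;> grind
  have hbh : ∑ j, (b j : GaussianInt) * h j = 0 := by
    ext <;> simp [h, s, w, Fin.sum_univ_four] <;> grind
  obtain ⟨d, z, hz, m, hm⟩ := GaussianInt.exists_content h n fun j k => ⟨H j k, hH j k⟩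
  have hd : d ≠ 0 := by
    rintro rfl
    have := congrArg Zsqrtd.re (hz 0)
    simp [h] at this
    exact hn this
  have hzz : ∑ j, z j * z j = 0 := by
    apply mul_left_cancel₀ (mul_ne_zero hd hd)
    rw [mul_zero, ← hsq, Finset.mul_sum]
    exact Finset.sum_congr rfl fun j _ => by rw [hz]; ring
  have hcancel (f : Fin 4 → ℤ) (hf : ∑ j, (f j : GaussianInt) * h j = 0) :
      ∑ j, (f j : GaussianInt) * z j = 0 := by
    apply mul_left_cancel₀ hd
    rw [mul_zero, ← hf, Finset.mul_sum]
    exact Finset.sum_congr rfl fun j _ => by rw [hz]; ring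
  have hnorm : ∀ j, p - a j * a j - b j * b j = m * (z j).norm := by
    intro j
    apply mul_left_cancel₀ hn
    rw [← mul_assoc, ← hm, ← Zsqrtd.norm_mul, ← hz]
    have h1 := hH j j
    rw [← Zsqrtd.norm_eq_mul_conj] at h1
    have h2 := congrArg Zsqrtd.re h1
    rw [Zsqrtd.re_intCast] at h2
    rw [h2]
    fin_cases j <;> simp [H, s] <;> grind
  have haz := hcancel a hah
  have hbz := hcancel b hbh
  simp only [Fin.sum_univ_four, Zsqrtd.ext_iff, Zsqrtd.re_add, Zsqrtd.im_add, Zsqrtd.re_mul,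
    Zsqrtd.im_mul, Zsqrtd.re_intCast, Zsqrtd.im_intCast, Zsqrtd.re_zero, Zsqrtd.im_zero]
    at hzz haz hbz
  simp only [Zsqrtd.norm_def] at hnorm
  refine ⟨m, fun j => (z j).re, fun j => (z j).im, ?_⟩
  simp only [Fin.sum_univ_four]
  exact ⟨by linarith [hzz.1], by linarith [hzz.2], by linarith [haz.1], by linarith [haz.2],
    by linarith [hbz.1], by linarith [hbz.2], fun j => by linear_combination hnorm j⟩

/-- Two orthogonal vectors of norm `p` in `ℤ⁴` whose first coordinates do not already exhaust the
norm `p` extend to four pairwise orthogonal vectors of norm `p`. -/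
lemma exists_orthogonal_pair_of_ne {p : ℕ} (hp : p.Prime) {a b : Fin 4 → ℤ}
    (haa : ∑ t, a t * a t = (p : ℤ)) (hbb : ∑ t, b t * b t = (p : ℤ))
    (hab : ∑ t, a t * b t = 0) (hn : (p : ℤ) - a 0 * a 0 - b 0 * b 0 ≠ 0) :
    ∃ c d : Fin 4 → ℤ, ∑ t, c t * c t = (p : ℤ) ∧ ∑ t, d t * d t = (p : ℤ) ∧
      ∑ t, c t * d t = 0 ∧ ∑ t, a t * c t = 0 ∧ ∑ t, a t * d t = 0 ∧
      ∑ t, b t * c t = 0 ∧ ∑ t, b t * d t = 0 := by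
  have hp0 : (0 : ℤ) < p := by exact_mod_cast hp.pos
  obtain ⟨m, x, y, hxy, hxy0, hax, hay, hbx, hby, hnorm⟩ := exists_isotropic_of_ne haa hbb hab hn
  simp only [Fin.sum_univ_four] at haa hbb hab hxy hxy0 hax hay hbx hby ⊢
  have hmx : m * (x 0 * x 0 + x 1 * x 1 + x 2 * x 2 + x 3 * x 3) = p := by
    linarith [hnorm 0, hnorm 1, hnorm 2, hnorm 3, congrArg (m * ·) hxy]
  have hmy : m * (y 0 * y 0 + y 1 * y 1 + y 2 * y 2 + y 3 * y 3) = p := hxy ▸ hmx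
  have hm0 : 0 < m := by
    refine pos_of_mul_pos_left (hmx ▸ hp0) ?_
    linarith [mul_self_nonneg (x 0), mul_self_nonneg (x 1), mul_self_nonneg (x 2),
      mul_self_nonneg (x 3)]
  -- A Gaussian integer of norm `m`, by which `x + iy` has to be rescaled.
  obtain ⟨α, β, hαβ⟩ : ∃ α β : ℤ, α * α + β * β = m := by
    lift m to ℕ using hm0.le
    obtain rfl | rfl := (Nat.dvd_prime hp).1 (Int.natCast_dvd_natCast.1 ⟨_, hmx.symm⟩)
    · exact ⟨1, 0, by norm_num⟩
    · obtain ⟨i, hi⟩ : ∃ i, a i ≠ 0 := by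
        by_contra! hall
        simp [hall] at haa
        omega
      have hlt : x i * x i + y i * y i < 1 := by
        refine lt_of_mul_lt_mul_left ?_ hm0.le
        linarith [hnorm i, mul_self_pos.2 hi, mul_self_nonneg (b i)]
      have heq : x i * x i + y i * y i = 0 := by
        linarith [mul_self_nonneg (x i), mul_self_nonneg (y i)]
      exact ⟨a i, b i, by linear_combination -hnorm i - (m : ℤ) * heq⟩
  refine ⟨fun j => α * x j - β * y j, fun j => β * x j + α * y j,
    ?_, ?_, ?_, ?_, ?_, ?_, ?_⟩
  · linear_combination hmx - 2 * α * β * hxy0 - β ^ 2 * hxy +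
      (x 0 * x 0 + x 1 * x 1 + x 2 * x 2 + x 3 * x 3) * hαβ
  · linear_combination hmy + 2 * α * β * hxy0 + β ^ 2 * hxy +
      (y 0 * y 0 + y 1 * y 1 + y 2 * y 2 + y 3 * y 3) * hαβ
  · linear_combination α * β * hxy + (α ^ 2 - β ^ 2) * hxy0
  · linear_combination α * hax - β * hay
  · linear_combination β * hax + α * hay
  · linear_combination α * hbx - β * hby
  · linear_combination β * hbx + α * hby

/-- Two orthogonal vectors of norm `p` in `ℤ⁴` extend to four pairwise orthogonal vectors of
norm `p`. -/
lemma exists_orthogonal_pair {p : ℕ} (hp : p.Prime) {a b : Fin 4 → ℤ}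
    (haa : ∑ t, a t * a t = (p : ℤ)) (hbb : ∑ t, b t * b t = (p : ℤ))
    (hab : ∑ t, a t * b t = 0) :
    ∃ c d : Fin 4 → ℤ, ∑ t, c t * c t = (p : ℤ) ∧ ∑ t, d t * d t = (p : ℤ) ∧
      ∑ t, c t * d t = 0 ∧ ∑ t, a t * c t = 0 ∧ ∑ t, a t * d t = 0 ∧
      ∑ t, b t * c t = 0 ∧ ∑ t, b t * d t = 0 := by
  have hp0 : (p : ℤ) ≠ 0 := by exact_mod_cast hp.ne_zero
  obtain ⟨i, hi⟩ : ∃ i, (p : ℤ) - a i * a i - b i * b i ≠ 0 := by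
    by_contra! hall
    simp only [Fin.sum_univ_four] at haa hbb
    apply hp0
    linarith [hall 0, hall 1, hall 2, hall 3]
  let σ : Equiv.Perm (Fin 4) := Equiv.swap 0 i
  have hsum (f g : Fin 4 → ℤ) : ∑ t, f (σ t) * g (σ t) = ∑ t, f t * g t :=
    Equiv.sum_comp σ fun t => f t * g t
  obtain ⟨c, d, hcc, hdd, hcd, hac, had, hbc, hbd⟩ :=
    exists_orthogonal_pair_of_ne hp (a := a ∘ σ) (b := b ∘ σ) ((hsum a a).trans haa)
      ((hsum b b).trans hbb) ((hsum a b).trans hab) (by simpa [σ] using hi)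
  have hmix (f g : Fin 4 → ℤ) : ∑ t, f t * g (σ t) = ∑ t, f (σ t) * g t := by
    rw [← hsum f fun t => g (σ t)]
    simp [σ]
  exact ⟨c ∘ σ, d ∘ σ, (hsum c c).trans hcc, (hsum d d).trans hdd, (hsum c d).trans hcd,
    (hmix a c).trans hac, (hmix a d).trans had, (hmix b c).trans hbc, (hmix b d).trans hbd⟩

/-- Four pairwise orthogonal vectors of norm `p` form a `p`-orthonormal base. -/
lemma orthonormal_vecCons {p : ℤ} {a b c d : Fin 4 → ℤ}
    (haa : ∑ t, a t * a t = p) (hbb : ∑ t, b t * b t = p) (hcc : ∑ t, c t * c t = p)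
    (hdd : ∑ t, d t * d t = p) (hab : ∑ t, a t * b t = 0) (hac : ∑ t, a t * c t = 0)
    (had : ∑ t, a t * d t = 0) (hbc : ∑ t, b t * c t = 0) (hbd : ∑ t, b t * d t = 0)
    (hcd : ∑ t, c t * d t = 0) :
    (∀ i, ∑ t, ![a, b, c, d] i t * ![a, b, c, d] i t = p) ∧
      ∀ i j, i ≠ j → ∑ t, ![a, b, c, d] i t * ![a, b, c, d] j t = 0 := by
  have hcomm (f g : Fin 4 → ℤ) : ∑ t, f t * g t = ∑ t, g t * f t :=
    Finset.sum_congr rfl fun t _ => mul_comm _ _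
  refine ⟨fun i => ?_, fun i j hij => ?_⟩
  · fin_cases i <;> assumption
  · fin_cases i <;> fin_cases j <;>
      first
      | exact absurd rfl hij
      | assumption
      | (refine (hcomm _ _).trans ?_; assumption)

/-- A p-orthonormal system of k vectors (1 ≤ k ≤ 3) in ℤ⁴ extends to a
p-orthonormal base of four vectors. -/
theorem p_orthonormal_system_extends_to_base
    (p : ℕ) (hp : p.Prime) (k : ℕ) (hk1 : 1 ≤ k) (hk3 : k ≤ 3)
    (v : Fin k → (Fin 4 → ℤ))
    (hnorm : ∀ i, ∑ t, v i t * v i t = (p : ℤ))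
    (horth : ∀ i j, i ≠ j → ∑ t, v i t * v j t = 0) :
    ∃ w : Fin 4 → (Fin 4 → ℤ),
      (∀ i : Fin k, w (Fin.castLE (by omega) i) = v i) ∧
      (∀ i, ∑ t, w i t * w i t = (p : ℤ)) ∧
      (∀ i j, i ≠ j → ∑ t, w i t * w j t = 0) := by
  have hp0 : (p : ℤ) ≠ 0 := by exact_mod_cast hp.ne_zero
  obtain rfl | rfl | rfl : k = 1 ∨ k = 2 ∨ k = 3 := by omega
  · have h₀ := hnorm 0
    refine ⟨![v 0, ![-v 0 1, v 0 0, -v 0 3, v 0 2], ![-v 0 2, v 0 3, v 0 0, -v 0 1],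
      ![-v 0 3, -v 0 2, v 0 1, v 0 0]], fun i => by fin_cases i; rfl, ?_⟩
    rw [Fin.sum_univ_four] at h₀
    apply orthonormal_vecCons <;> simp [Fin.sum_univ_four] <;> linarith
  · obtain ⟨c, d, hcc, hdd, hcd, hac, had, hbc, hbd⟩ :=
      exists_orthogonal_pair hp (hnorm 0) (hnorm 1) (horth 0 1 (by decide))
    exact ⟨![v 0, v 1, c, d], fun i => by fin_cases i <;> rfl,
      orthonormal_vecCons (hnorm 0) (hnorm 1) hcc hdd (horth 0 1 (by decide)) hac had hbc hbd
        hcd⟩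
  · obtain ⟨d, hdd, had, hbd, hcd⟩ :=
      exists_orthogonal_to_three hp0 (hnorm 0) (hnorm 1) (hnorm 2) (horth 0 1 (by decide))
        (horth 0 2 (by decide)) (horth 1 2 (by decide))
    exact ⟨![v 0, v 1, v 2, d], fun i => by fin_cases i <;> rfl,
      orthonormal_vecCons (hnorm 0) (hnorm 1) (hnorm 2) hdd (horth 0 1 (by decide))
        (horth 0 2 (by decide)) had (horth 1 2 (by decide)) hbd hcd⟩
end

section
/- Let p ≥ 1 be an integer and let S = {v₁, v₂} be a p-orthonormal system in ℤ⁴ whose support is contained in a set of exactly two coordinate indices (i.e. there are indices a ≠ b such that every coordinate of v₁ and v₂ outside {a,b} is zero). Then there exists v₃ ∈ ℤ⁴ with ⟨v₁|v₃⟩ = 0, ⟨v₂|v₃⟩ = 0 and N(v₃) = p. -/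
/-- Some permutation of four indices moves a given pair of indices off itself. -/
lemma exists_perm_fin_four_pair_disjoint :
    ∀ a b : Fin 4, a ≠ b → ∃ σ : Equiv.Perm (Fin 4), ∀ t, t = a ∨ t = b → σ t ≠ a ∧ σ t ≠ b := by
  decide

/-- A two-vector p-orthonormal system in ℤ⁴ whose support lies in two coordinate
indices admits a third orthogonal vector of norm p, for every p ≥ 1. -/
theorem two_vector_supp_two_extension
    (p : ℤ) (hp : 1 ≤ p) (v₁ v₂ : Fin 4 → ℤ)
    (hn1 : ∑ t, v₁ t * v₁ t = p) (hn2 : ∑ t, v₂ t * v₂ t = p)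
    (ho : ∑ t, v₁ t * v₂ t = 0)
    (a b : Fin 4) (hab : a ≠ b)
    (hsupp : ∀ i, i ≠ a → i ≠ b → v₁ i = 0 ∧ v₂ i = 0) :
    ∃ v₃ : Fin 4 → ℤ, (∑ t, v₁ t * v₃ t = 0) ∧ (∑ t, v₂ t * v₃ t = 0) ∧
      ∑ t, v₃ t * v₃ t = p := by
  obtain ⟨σ, hσ⟩ := exists_perm_fin_four_pair_disjoint a b hab
  have hdisj (t : Fin 4) : (v₁ t = 0 ∧ v₂ t = 0) ∨ v₁ (σ t) = 0 := by
    by_cases ht : t = a ∨ t = b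
    · exact .inr (hsupp _ (hσ t ht).1 (hσ t ht).2).1
    · push Not at ht
      exact .inl (hsupp t ht.1 ht.2)
  refine ⟨v₁ ∘ σ, Finset.sum_eq_zero fun t _ ↦ ?_, Finset.sum_eq_zero fun t _ ↦ ?_, ?_⟩
  · rcases hdisj t with h | h <;> simp [h]
  · rcases hdisj t with h | h <;> simp [h]
  · exact (Equiv.sum_comp σ fun t ↦ v₁ t * v₁ t).trans hn1
end

section
/- Let p ≥ 1 be an integer and let S = {v₁, v₂, v₃} be a p-orthonormal system in ℤ⁴. Then there exists v₄ ∈ ℤ⁴ such that ⟨vᵢ|v₄⟩ = 0 for i = 1, 2, 3 and N(v₄) = p. -/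
/-- If the rows `a`, `b`, `c` of a 3 × 3 integer determinant, extended by a fourth coordinate
`x`, `y`, `z`, are pairwise orthogonal of norm `p ≠ 0`, then `p` divides the determinant `d`, and
the square of the quotient is `p - x² - y² - z²`. -/
lemma exists_quotient_of_orthogonal {p a₁ a₂ a₃ b₁ b₂ b₃ c₁ c₂ c₃ x y z d : ℤ} (hp : p ≠ 0)
    (haa : a₁ * a₁ + a₂ * a₂ + a₃ * a₃ = p - x * x)
    (hbb : b₁ * b₁ + b₂ * b₂ + b₃ * b₃ = p - y * y)
    (hcc : c₁ * c₁ + c₂ * c₂ + c₃ * c₃ = p - z * z)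
    (hab : a₁ * b₁ + a₂ * b₂ + a₃ * b₃ = -(x * y))
    (hac : a₁ * c₁ + a₂ * c₂ + a₃ * c₃ = -(x * z))
    (hbc : b₁ * c₁ + b₂ * c₂ + b₃ * c₃ = -(y * z))
    (hd : d = a₁ * (b₂ * c₃ - b₃ * c₂) - a₂ * (b₁ * c₃ - b₃ * c₁) + a₃ * (b₁ * c₂ - b₂ * c₁)) :
    ∃ q : ℤ, d = p * q ∧ q * q = p - x * x - y * y - z * z := by
  have gram : d ^ 2 =
      (a₁ * a₁ + a₂ * a₂ + a₃ * a₃) * (b₁ * b₁ + b₂ * b₂ + b₃ * b₃) *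
          (c₁ * c₁ + c₂ * c₂ + c₃ * c₃)
        + 2 * (a₁ * b₁ + a₂ * b₂ + a₃ * b₃) * (a₁ * c₁ + a₂ * c₂ + a₃ * c₃) *
          (b₁ * c₁ + b₂ * c₂ + b₃ * c₃)
        - (a₁ * a₁ + a₂ * a₂ + a₃ * a₃) * (b₁ * c₁ + b₂ * c₂ + b₃ * c₃) ^ 2
        - (b₁ * b₁ + b₂ * b₂ + b₃ * b₃) * (a₁ * c₁ + a₂ * c₂ + a₃ * c₃) ^ 2
        - (c₁ * c₁ + c₂ * c₂ + c₃ * c₃) * (a₁ * b₁ + a₂ * b₂ + a₃ * b₃) ^ 2 := by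
    rw [hd]; ring
  rw [haa, hbb, hcc, hab, hac, hbc] at gram
  have hsq : d ^ 2 = p ^ 2 * (p - x * x - y * y - z * z) := by rw [gram]; ring
  obtain ⟨q, rfl⟩ := (Int.pow_dvd_pow_iff two_ne_zero).1 (Dvd.intro _ hsq.symm)
  refine ⟨q, rfl, mul_left_cancel₀ (pow_ne_zero 2 hp) ?_⟩
  rw [← hsq]; ring

/-- A three-vector p-orthonormal system in ℤ⁴ admits a fourth orthogonal vector
of norm p, for every p ≥ 1. -/
theorem three_vector_extension
    (p : ℤ) (hp : 1 ≤ p) (v₁ v₂ v₃ : Fin 4 → ℤ)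
    (hn1 : ∑ t, v₁ t * v₁ t = p) (hn2 : ∑ t, v₂ t * v₂ t = p)
    (hn3 : ∑ t, v₃ t * v₃ t = p)
    (ho12 : ∑ t, v₁ t * v₂ t = 0) (ho13 : ∑ t, v₁ t * v₃ t = 0)
    (ho23 : ∑ t, v₂ t * v₃ t = 0) :
    ∃ v₄ : Fin 4 → ℤ, (∑ t, v₁ t * v₄ t = 0) ∧ (∑ t, v₂ t * v₄ t = 0) ∧
      (∑ t, v₃ t * v₄ t = 0) ∧ ∑ t, v₄ t * v₄ t = p := by
  have hp0 : p ≠ 0 := by omega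
  simp only [Fin.sum_univ_four] at *
  have minor (i j k l : Fin 4)
      (h : ∀ f : Fin 4 → ℤ, f i + f j + f k + f l = f 0 + f 1 + f 2 + f 3) :=
    exists_quotient_of_orthogonal hp0 (x := v₁ l) (y := v₂ l) (z := v₃ l)
      (a₁ := v₁ i) (a₂ := v₁ j) (a₃ := v₁ k) (b₁ := v₂ i) (b₂ := v₂ j) (b₃ := v₂ k)
      (c₁ := v₃ i) (c₂ := v₃ j) (c₃ := v₃ k)
      (by linarith [h fun t => v₁ t * v₁ t]) (by linarith [h fun t => v₂ t * v₂ t])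
      (by linarith [h fun t => v₃ t * v₃ t]) (by linarith [h fun t => v₁ t * v₂ t])
      (by linarith [h fun t => v₁ t * v₃ t]) (by linarith [h fun t => v₂ t * v₃ t]) rfl
  obtain ⟨q₀, h₀, s₀⟩ := minor 1 2 3 0 (fun f => by ring)
  obtain ⟨q₁, h₁, s₁⟩ := minor 0 2 3 1 (fun f => by ring)
  obtain ⟨q₂, h₂, s₂⟩ := minor 0 1 3 2 (fun f => by ring)
  obtain ⟨q₃, h₃, s₃⟩ := minor 0 1 2 3 (fun f => by ring)
  have orthogonal (v : Fin 4 → ℤ)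
      (h : v 0 * (p * q₀) - v 1 * (p * q₁) + v 2 * (p * q₂) - v 3 * (p * q₃) = 0) :
      v 0 * q₀ + v 1 * -q₁ + v 2 * q₂ + v 3 * -q₃ = 0 :=
    mul_left_cancel₀ hp0 (by linear_combination h)
  refine ⟨![q₀, -q₁, q₂, -q₃], orthogonal v₁ ?_, orthogonal v₂ ?_, orthogonal v₃ ?_, ?_⟩
  · rw [← h₀, ← h₁, ← h₂, ← h₃]; ring
  · rw [← h₀, ← h₁, ← h₂, ← h₃]; ring
  · rw [← h₀, ← h₁, ← h₂, ← h₃]; ring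
  · change q₀ * q₀ + -q₁ * -q₁ + q₂ * q₂ + -q₃ * -q₃ = p
    linarith
end

section
/- Let p ≥ 1 be an integer and let v₁ = (x₁,x₂,x₃,x₄), v₂ = (y₁,y₂,y₃,y₄), v₃ = (z₁,z₂,z₃,z₄) be a p-orthonormal system in ℤ⁴. Let t = (t₁,t₂,t₃,t₄) be the exterior product of v₁, v₂, v₃, where tᵢ = (−1)ⁱ times the 3×3 determinant of the matrix obtained from the 3×4 matrix with rows v₁, v₂, v₃ by deleting the i-th column. Then ⟨vᵢ|t⟩ = 0 for i = 1, 2, 3, and tᵢ² = p²(p − xᵢ² − yᵢ² − zᵢ²) for each 1 ≤ i ≤ 4; consequently p divides each tᵢ and N(t) = p³. -/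
/-- If the rows of a 3×3 matrix have Gram matrix `p • 1 - c cᵀ`, then the square of its
determinant is `p² (p - |c|²)`. -/
theorem det_sq_of_mul_transpose_eq {R : Type*} [CommRing R] (M : Matrix (Fin 3) (Fin 3) R)
    (p : R) (c : Fin 3 → R) (h : M * M.transpose = p • 1 - Matrix.vecMulVec c c) :
    M.det ^ 2 = p ^ 2 * (p - c 0 ^ 2 - c 1 ^ 2 - c 2 ^ 2) := by
  have hdet : M.det ^ 2 = (M * M.transpose).det := by
    rw [Matrix.det_mul, Matrix.det_transpose, sq]
  rw [hdet, h, Matrix.det_fin_three]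
  simp [Matrix.vecMulVec_apply]
  ring

/-- The exterior product t of a three-vector p-orthonormal system v₁, v₂, v₃ in
ℤ⁴ (signed 3×3 minors of the 3×4 matrix with rows v₁, v₂, v₃, with sign (−1)ⁱ
for the minor omitting column i) is orthogonal to each vᵢ, satisfies
tᵢ² = p²(p − x_i² − y_i² − z_i²), each tᵢ is divisible by p, and N(t) = p³. -/
theorem exterior_product_properties
    (p : ℤ) (hp : 1 ≤ p) (v₁ v₂ v₃ : Fin 4 → ℤ)
    (hn1 : ∑ t, v₁ t * v₁ t = p) (hn2 : ∑ t, v₂ t * v₂ t = p)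
    (hn3 : ∑ t, v₃ t * v₃ t = p)
    (ho12 : ∑ t, v₁ t * v₂ t = 0) (ho13 : ∑ t, v₁ t * v₃ t = 0)
    (ho23 : ∑ t, v₂ t * v₃ t = 0)
    (t : Fin 4 → ℤ)
    (ht : ∀ i : Fin 4, t i = (-1) ^ ((i : ℕ) + 1) *
      ((Matrix.of ![v₁, v₂, v₃]).submatrix id i.succAbove).det) :
    (∑ s, v₁ s * t s = 0) ∧ (∑ s, v₂ s * t s = 0) ∧ (∑ s, v₃ s * t s = 0) ∧
    (∀ i, t i ^ 2 = p ^ 2 * (p - v₁ i ^ 2 - v₂ i ^ 2 - v₃ i ^ 2)) ∧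
    (∀ i, p ∣ t i) ∧ (∑ s, t s * t s = p ^ 3) := by
  have hsq : ∀ i, t i ^ 2 = p ^ 2 * (p - v₁ i ^ 2 - v₂ i ^ 2 - v₃ i ^ 2) := by
    intro i
    have hsign : ((-1 : ℤ) ^ ((i : ℕ) + 1)) ^ 2 = 1 := by
      rw [← pow_mul, mul_comm, pow_mul]
      norm_num
    rw [ht i, mul_pow, hsign, one_mul]
    refine det_sq_of_mul_transpose_eq _ p ![v₁ i, v₂ i, v₃ i] ?_
    rw [Fin.sum_univ_succAbove _ i] at hn1 hn2 hn3 ho12 ho13 ho23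
    rw [Fin.sum_univ_three] at hn1 hn2 hn3 ho12 ho13 ho23
    ext j k
    rw [Matrix.sub_apply, Matrix.smul_apply]
    fin_cases j <;> fin_cases k <;>
      simp [Matrix.mul_apply, Fin.sum_univ_three] <;> linarith
  refine ⟨?_, ?_, ?_, hsq, fun i => ?_, ?_⟩
  iterate 3
    simp [Fin.sum_univ_four, ht, Matrix.det_fin_three, Fin.succAbove]
    ring
  · exact (Int.pow_dvd_pow_iff two_ne_zero).1 ⟨_, hsq i⟩
  · simp only [← sq, hsq, ← Finset.mul_sum, Finset.sum_sub_distrib] at *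
    rw [hn1, hn2, hn3]
    simp
    ring
end

section
/- Let p be a prime number and let S = {v₁, v₂} be a p-orthonormal system in ℤ⁴, v₁ = (x₁,x₂,x₃,x₄) and v₂ = (y₁,y₂,y₃,y₄), with |supp(S)| > 2. Then gcd(x₁,x₂,x₃,x₄) = gcd(y₁,y₂,y₃,y₄) = 1, and the greatest common divisor of the six 2×2 minors m_{ij} = xᵢyⱼ − xⱼyᵢ (1 ≤ i < j ≤ 4) of the 2×4 coordinate matrix equals 1. -/
open Finset in
/-- A vector whose squared norm is prime is primitive. -/
lemma gcd_eq_one_of_sum_mul_self_eq_prime {ι : Type*} [Fintype ι] {p : ℕ} (hp : p.Prime)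
    {v : ι → ℤ} (hv : ∑ t, v t * v t = (p : ℤ)) : univ.gcd v = 1 := by
  have hdvd : univ.gcd v * univ.gcd v ∣ (p : ℤ) :=
    hv ▸ dvd_sum fun i hi => mul_dvd_mul (gcd_dvd hi) (gcd_dvd hi)
  rw [← Finset.normalize_gcd, normalize_eq_one]
  exact (Nat.prime_iff_prime_int.mp hp).squarefree _ hdvd

open Finset in
/-- The sum of the squares of the minors involving the `i`-th column of a matrix whose two rows are
orthogonal of squared norm `p`. -/
lemma sum_minor_sq {ι R : Type*} [Fintype ι] [CommRing R] {p : R} {v w : ι → R}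
    (hv : ∑ t, v t * v t = p) (hw : ∑ t, w t * w t = p) (ho : ∑ t, v t * w t = 0) (i : ι) :
    ∑ j, (v i * w j - v j * w i) ^ 2 = p * (v i ^ 2 + w i ^ 2) := by
  have h : ∀ j, (v i * w j - v j * w i) ^ 2 =
      v i ^ 2 * (w j * w j) + w i ^ 2 * (v j * v j) - 2 * v i * w i * (v j * w j) :=
    fun j => by ring
  simp only [h, sum_sub_distrib, sum_add_distrib, ← mul_sum, hv, hw, ho]
  ring

open Finset in
/-- If `p > 0` divides every minor of two orthogonal vectors of squared norm `p`, then at most two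
coordinates lie in the support. -/
lemma card_support_le_two_of_dvd_minors {ι : Type*} [Fintype ι] {p : ℕ} (hp : 0 < p)
    {v w : ι → ℤ} (hv : ∑ t, v t * v t = (p : ℤ)) (hw : ∑ t, w t * w t = (p : ℤ))
    (ho : ∑ t, v t * w t = 0) (hdvd : ∀ i j, (p : ℤ) ∣ v i * w j - v j * w i) :
    #{i | v i ≠ 0 ∨ w i ≠ 0} ≤ 2 := by
  have hp' : (0 : ℤ) < p := by exact_mod_cast hp
  have hcol : ∀ i, (p : ℤ) ∣ v i ^ 2 + w i ^ 2 := fun i => by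
    have h : (p : ℤ) ^ 2 ∣ p * (v i ^ 2 + w i ^ 2) :=
      sum_minor_sq hv hw ho i ▸ dvd_sum fun j _ => pow_dvd_pow_of_dvd (hdvd i j) 2
    rw [sq] at h
    exact Int.dvd_of_mul_dvd_mul_left hp'.ne' h
  have hle : ∀ i ∈ ({i | v i ≠ 0 ∨ w i ≠ 0} : Finset ι), (p : ℤ) ≤ v i ^ 2 + w i ^ 2 := by
    intro i hi
    refine Int.le_of_dvd ?_ (hcol i)
    rcases (mem_filter.mp hi).2 with h | h <;> positivity
  have hsum : ∑ i, (v i ^ 2 + w i ^ 2) = 2 * (p : ℤ) := by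
    simp only [sq, sum_add_distrib, hv, hw]
    ring
  have hcard := (card_nsmul_le_sum _ _ _ hle).trans
    (sum_le_univ_sum_of_nonneg fun i => by positivity)
  rw [hsum, nsmul_eq_mul] at hcard
  exact_mod_cast le_of_mul_le_mul_right hcard hp'

open Finset in
/-- A prime dividing every minor of two orthogonal vectors of squared norm `p` is equal to `p`. -/
lemma prime_eq_of_dvd_minors {ι : Type*} [Fintype ι] {p q : ℕ} (hp : p.Prime) (hq : q.Prime)
    {v w : ι → ℤ} (hv : ∑ t, v t * v t = (p : ℤ)) (hw : ∑ t, w t * w t = (p : ℤ))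
    (ho : ∑ t, v t * w t = 0) (hdvd : ∀ i j, (q : ℤ) ∣ v i * w j - v j * w i) : q = p := by
  have hsum : ∑ i, ∑ j, (v i * w j - v j * w i) ^ 2 = 2 * (p : ℤ) ^ 2 := by
    simp only [sum_minor_sq hv hw ho, ← mul_sum]
    simp only [sq, sum_add_distrib, hv, hw]
    ring
  have h : (q : ℤ) ^ 2 ∣ 2 * (p : ℤ) ^ 2 :=
    hsum ▸ dvd_sum fun i _ => dvd_sum fun j _ => pow_dvd_pow_of_dvd (hdvd i j) 2
  have h' : q ^ 2 ∣ 2 * p ^ 2 := by exact_mod_cast h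
  by_contra hne
  have hco : Nat.Coprime (q ^ 2) (p ^ 2) := ((Nat.coprime_primes hq hp).mpr hne).pow 2 2
  have := Nat.le_of_dvd two_pos (hco.dvd_of_dvd_mul_right h')
  nlinarith [hq.two_le]

/-- For a two-vector p-orthonormal system in ℤ⁴ (p prime) with support of size
greater than 2, the coordinates of each vector are coprime and the six 2×2
minors of the coordinate matrix have gcd 1. -/
theorem invariant_factors_one
    (p : ℕ) (hp : p.Prime) (v₁ v₂ : Fin 4 → ℤ)
    (hn1 : ∑ t, v₁ t * v₁ t = (p : ℤ)) (hn2 : ∑ t, v₂ t * v₂ t = (p : ℤ))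
    (ho : ∑ t, v₁ t * v₂ t = 0)
    (hsupp : 2 < (Finset.univ.filter (fun i : Fin 4 => v₁ i ≠ 0 ∨ v₂ i ≠ 0)).card) :
    Finset.gcd Finset.univ v₁ = 1 ∧ Finset.gcd Finset.univ v₂ = 1 ∧
    Finset.gcd (Finset.univ.filter (fun q : Fin 4 × Fin 4 => q.1 < q.2))
      (fun q => v₁ q.1 * v₂ q.2 - v₁ q.2 * v₂ q.1) = 1 := by
  refine ⟨gcd_eq_one_of_sum_mul_self_eq_prime hp hn1,
    gcd_eq_one_of_sum_mul_self_eq_prime hp hn2, ?_⟩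
  rw [← Finset.normalize_gcd, normalize_eq_one, Int.isUnit_iff_natAbs_eq]
  by_contra hne
  obtain ⟨q, hq, hqd⟩ := Nat.exists_prime_and_dvd hne
  have hlt : ∀ i j : Fin 4, i < j → (q : ℤ) ∣ v₁ i * v₂ j - v₁ j * v₂ i := fun i j hij =>
    (Int.natCast_dvd.mpr hqd).trans (Finset.gcd_dvd
      (f := fun r : Fin 4 × Fin 4 => v₁ r.1 * v₂ r.2 - v₁ r.2 * v₂ r.1)
      (Finset.mem_filter.mpr ⟨Finset.mem_univ (i, j), hij⟩))
  have hdvd : ∀ i j, (q : ℤ) ∣ v₁ i * v₂ j - v₁ j * v₂ i := by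
    intro i j
    rcases lt_trichotomy i j with h | rfl | h
    · exact hlt i j h
    · simp
    · exact dvd_sub_comm.mp (hlt j i h)
  obtain rfl := prime_eq_of_dvd_minors hp hq hn1 hn2 ho hdvd
  exact absurd (card_support_le_two_of_dvd_minors hp.pos hn1 hn2 ho hdvd) hsupp.not_ge
end

section
/- Let p be a prime number and let S = {v₁, v₂} be a p-orthonormal system in ℤ⁴ with |supp(S)| > 2. Then the ℤ-linear map ℤ⁴ → ℤ² given by x ↦ (⟨v₁|x⟩, ⟨v₂|x⟩) is surjective (equivalently, both invariant factors of the 2×4 integer matrix with rows v₁ and v₂ are equal to 1). -/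
/-- The `2 × 2` minor, on columns `i` and `j`, of the matrix with rows `v` and `w`. -/
def rowMinor {ι : Type*} (v w : ι → ℤ) (i j : ι) : ℤ := v i * w j - v j * w i

theorem rowMinor_sq_add_le_gram (v w : Fin 4 → ℤ) {i j k : Fin 4}
    (hij : i ≠ j) (hik : i ≠ k) (hjk : j ≠ k) :
    rowMinor v w i j ^ 2 + rowMinor v w i k ^ 2 + rowMinor v w j k ^ 2 ≤
      (∑ t, v t * v t) * (∑ t, w t * w t) - (∑ t, v t * w t) ^ 2 := by
  have h := fun a b : Fin 4 => sq_nonneg (v a * w b - v b * w a)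
  simp only [rowMinor, Fin.sum_univ_four]
  fin_cases i <;> fin_cases j <;> fin_cases k <;> first
    | exact absurd rfl hij
    | exact absurd rfl hik
    | exact absurd rfl hjk
    | (simp only [Fin.zero_eta, Fin.mk_one, Fin.reduceFinMk]
       linarith [h 0 1, h 0 2, h 0 3, h 1 2, h 1 3, h 2 3])

theorem exists_rowMinor_ne_zero (v w : Fin 4 → ℤ)
    (h : (∑ t, v t * v t) * (∑ t, w t * w t) - (∑ t, v t * w t) ^ 2 ≠ 0) :
    ∃ i j, rowMinor v w i j ≠ 0 := by
  by_contra! hD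
  apply h
  have gram : (∑ t, v t * v t) * (∑ t, w t * w t) - (∑ t, v t * w t) ^ 2 =
      rowMinor v w 0 1 ^ 2 + rowMinor v w 0 2 ^ 2 + rowMinor v w 0 3 ^ 2 +
      rowMinor v w 1 2 ^ 2 + rowMinor v w 1 3 ^ 2 + rowMinor v w 2 3 ^ 2 := by
    simp only [rowMinor, Fin.sum_univ_four]
    ring
  simp [gram, hD]

/-- If `p` divides every minor of a `p`-orthonormal pair, the pair is supported on at most two
coordinates. -/
theorem card_support_le_two_of_dvd_rowMinor {p : ℤ} (hp : p ≠ 0) (v w : Fin 4 → ℤ)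
    (hv : ∑ t, v t * v t = p) (hw : ∑ t, w t * w t = p) (ho : ∑ t, v t * w t = 0)
    (hdvd : ∀ i j, p ∣ rowMinor v w i j) :
    (Finset.univ.filter (fun i : Fin 4 => v i ≠ 0 ∨ w i ≠ 0)).card ≤ 2 := by
  obtain ⟨i, j, hD⟩ := exists_rowMinor_ne_zero v w (by simp [hv, hw, ho, hp])
  have hij : i ≠ j := by
    rintro rfl
    exact hD (sub_self _)
  refine (Finset.card_le_card (t := {i, j}) fun k hk => ?_).trans Finset.card_le_two
  simp only [Finset.mem_filter, Finset.mem_univ, true_and] at hk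
  by_contra hmem
  simp only [Finset.mem_insert, Finset.mem_singleton, not_or] at hmem
  have hle := rowMinor_sq_add_le_gram v w hij (Ne.symm hmem.1) (Ne.symm hmem.2)
  rw [hv, hw, ho] at hle
  have hge : p ^ 2 ≤ rowMinor v w i j ^ 2 :=
    Int.le_of_dvd (by positivity) (pow_dvd_pow_of_dvd (hdvd i j) 2)
  have hik : rowMinor v w i k = 0 := by
    apply pow_eq_zero_iff two_ne_zero |>.1
    nlinarith [sq_nonneg (rowMinor v w i k), sq_nonneg (rowMinor v w j k)]
  have hjk : rowMinor v w j k = 0 := by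
    apply pow_eq_zero_iff two_ne_zero |>.1
    nlinarith [sq_nonneg (rowMinor v w i k), sq_nonneg (rowMinor v w j k)]
  have hvk : v k * rowMinor v w i j = 0 := by
    have : v k * rowMinor v w i j = v j * rowMinor v w i k - v i * rowMinor v w j k := by
      simp only [rowMinor]; ring
    simp [this, hik, hjk]
  have hwk : w k * rowMinor v w i j = 0 := by
    have : w k * rowMinor v w i j = w j * rowMinor v w i k - w i * rowMinor v w j k := by
      simp only [rowMinor]; ring
    simp [this, hik, hjk]
  exact hk.elim (fun h => h ((mul_eq_zero.1 hvk).resolve_right hD))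
    (fun h => h ((mul_eq_zero.1 hwk).resolve_right hD))

/-- An orthogonal pair of vectors of norm `p` with some minor coprime to `p` defines a surjection
onto `ℤ × ℤ`. -/
theorem surjective_of_isCoprime_rowMinor {ι : Type*} [Fintype ι] {p : ℤ} (v w : ι → ℤ)
    (hv : ∑ t, v t * v t = p) (hw : ∑ t, w t * w t = p) (ho : ∑ t, v t * w t = 0)
    {i j : ι} (hc : IsCoprime p (rowMinor v w i j)) :
    Function.Surjective
      (fun x : ι → ℤ => ((∑ t, v t * x t, ∑ t, w t * x t) : ℤ × ℤ)) := by
  classical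
  rintro ⟨y, z⟩
  obtain ⟨a, b, hab⟩ := hc
  have ho' : ∑ t, w t * v t = 0 := by simpa only [mul_comm] using ho
  have key (u : ι → ℤ) :
      ∑ t, u t * (y * a * v t + z * a * w t + b * (y * w j - z * v j) * (Pi.single i 1 : ι → ℤ) t +
        b * (z * v i - y * w i) * (Pi.single j 1 : ι → ℤ) t) =
      y * a * (∑ t, u t * v t) + z * a * (∑ t, u t * w t) + b * (y * w j - z * v j) * u i +
        b * (z * v i - y * w i) * u j := by
    simp [mul_add, Finset.sum_add_distrib, Finset.mul_sum, Pi.single_apply, mul_left_comm,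
      mul_comm]
  simp only [rowMinor] at hab
  refine ⟨_, Prod.ext ((key v).trans ?_) ((key w).trans ?_)⟩
  · rw [hv, ho]
    linear_combination y * hab
  · rw [hw, ho']
    linear_combination z * hab

/-- For a two-vector p-orthonormal system in ℤ⁴ (p prime) with support of size
greater than 2, the map x ↦ (⟨v₁|x⟩, ⟨v₂|x⟩) from ℤ⁴ to ℤ² is surjective. -/
theorem dot_product_map_surjective
    (p : ℕ) (hp : p.Prime) (v₁ v₂ : Fin 4 → ℤ)
    (hn1 : ∑ t, v₁ t * v₁ t = (p : ℤ)) (hn2 : ∑ t, v₂ t * v₂ t = (p : ℤ))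
    (ho : ∑ t, v₁ t * v₂ t = 0)
    (hsupp : 2 < (Finset.univ.filter (fun i : Fin 4 => v₁ i ≠ 0 ∨ v₂ i ≠ 0)).card) :
    Function.Surjective
      (fun x : Fin 4 → ℤ => ((∑ t, v₁ t * x t, ∑ t, v₂ t * x t) : ℤ × ℤ)) := by
  have hdvd : ∃ i j, ¬ (p : ℤ) ∣ rowMinor v₁ v₂ i j := by
    by_contra! h
    exact absurd (card_support_le_two_of_dvd_rowMinor (by exact_mod_cast hp.ne_zero)
      v₁ v₂ hn1 hn2 ho h) hsupp.not_ge
  obtain ⟨i, j, hij⟩ := hdvd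
  exact surjective_of_isCoprime_rowMinor v₁ v₂ hn1 hn2 ho
    (((Nat.prime_iff_prime_int.1 hp).coprime_iff_not_dvd).2 hij)
end

section
/- Let p ≥ 1 be an integer, let {v₁, v₂} be a p-orthonormal system in ℤ⁴, and let w₁, w₂ ∈ ℤ⁴ satisfy ⟨vᵢ|wⱼ⟩ = 0 for all i, j ∈ {1,2}. Let V be the 4×4 integer matrix with rows v₁, v₂, w₁, w₂. Then det(V)² = p² · (N(w₁)N(w₂) − ⟨w₁|w₂⟩²), i.e. the square of det(V) equals p² times the determinant of the Gram matrix of {w₁, w₂}. -/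
/-- If {v₁, v₂} is a p-orthonormal system in ℤ⁴ and w₁, w₂ are orthogonal to
both v₁ and v₂, then the square of the determinant of the 4×4 matrix with rows
v₁, v₂, w₁, w₂ equals p² times the Gram determinant of {w₁, w₂}. -/
theorem det_sq_eq_p_sq_mul_gram_det
    (p : ℤ) (hp : 1 ≤ p) (v₁ v₂ w₁ w₂ : Fin 4 → ℤ)
    (hn1 : ∑ t, v₁ t * v₁ t = p) (hn2 : ∑ t, v₂ t * v₂ t = p)
    (ho : ∑ t, v₁ t * v₂ t = 0)
    (h11 : ∑ t, v₁ t * w₁ t = 0) (h12 : ∑ t, v₁ t * w₂ t = 0)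
    (h21 : ∑ t, v₂ t * w₁ t = 0) (h22 : ∑ t, v₂ t * w₂ t = 0) :
    (Matrix.of ![v₁, v₂, w₁, w₂]).det ^ 2 =
      p ^ 2 * ((∑ t, w₁ t * w₁ t) * (∑ t, w₂ t * w₂ t) - (∑ t, w₁ t * w₂ t) ^ 2) := by
  have gram : Matrix.of ![v₁, v₂, w₁, w₂] * (Matrix.of ![v₁, v₂, w₁, w₂]).transpose =
      !![p, 0, 0, 0;
         0, p, 0, 0;
         0, 0, ∑ t, w₁ t * w₁ t, ∑ t, w₁ t * w₂ t;
         0, 0, ∑ t, w₁ t * w₂ t, ∑ t, w₂ t * w₂ t] := by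
    have comm (x y : Fin 4 → ℤ) : ∑ t, x t * y t = ∑ t, y t * x t := by
      simp only [mul_comm]
    ext i j
    rw [Matrix.mul_apply]
    fin_cases i <;> fin_cases j
    exacts [hn1, ho, h11, h12, (comm _ _).trans ho, hn2, h21, h22,
      (comm _ _).trans h11, (comm _ _).trans h21, rfl, rfl,
      (comm _ _).trans h12, (comm _ _).trans h22, comm _ _, rfl]
  have det_gram := congrArg Matrix.det gram
  rw [Matrix.det_mul, Matrix.det_transpose, ← sq] at det_gram
  rw [det_gram]
  generalize ∑ t, w₁ t * w₁ t = a, ∑ t, w₁ t * w₂ t = b, ∑ t, w₂ t * w₂ t = c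
  simp [Matrix.det_succ_row_zero, Fin.sum_univ_succ, Fin.succAbove]
  ring
end

section
/- Let p be a prime number, let S = {v₁, v₂} be a p-orthonormal system in ℤ⁴ with |supp(S)| > 2, and let {w₁, w₂} be a ℤ-basis of the orthogonal lattice Λ^⊥ = { v ∈ ℤ⁴ : ⟨v₁|v⟩ = ⟨v₂|v⟩ = 0 }. Then the determinant of the Gram matrix of {w₁, w₂} equals p², i.e. N(w₁)N(w₂) − ⟨w₁|w₂⟩² = p². -/
/-- The Plücker coordinate `(v ∧ w) i j` of a pair of integer vectors. -/
def wedge {ι : Type*} (v w : ι → ℤ) (i j : ι) : ℤ := v i * w j - v j * w i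

/-- Lagrange's identity in dimension four, summed over ordered pairs of indices. -/
theorem sum_wedge_sq (v w : Fin 4 → ℤ) :
    ∑ i, ∑ j, wedge v w i j ^ 2 =
      2 * ((∑ t, v t * v t) * (∑ t, w t * w t) - (∑ t, v t * w t) ^ 2) := by
  simp only [Fin.sum_univ_four, wedge]
  ring

/-- The matrix of the Hodge dual of `v ∧ w` in dimension four. -/
def hodgeWedge (v w : Fin 4 → ℤ) : Matrix (Fin 4) (Fin 4) ℤ :=
  !![0, wedge v w 2 3, -wedge v w 1 3, wedge v w 1 2;
    -wedge v w 2 3, 0, wedge v w 0 3, -wedge v w 0 2;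
    wedge v w 1 3, -wedge v w 0 3, 0, wedge v w 0 1;
    -wedge v w 1 2, wedge v w 0 2, -wedge v w 0 1, 0]

theorem hodgeWedge_antisymm (v w : Fin 4 → ℤ) (k l : Fin 4) :
    hodgeWedge v w k l = -hodgeWedge v w l k := by
  fin_cases k <;> fin_cases l <;> simp [hodgeWedge]

theorem sum_mul_hodgeWedge_left (v w : Fin 4 → ℤ) (k : Fin 4) :
    ∑ t, v t * hodgeWedge v w k t = 0 := by
  fin_cases k <;> simp [hodgeWedge, Fin.sum_univ_four, wedge] <;> ring

theorem sum_mul_hodgeWedge_right (v w : Fin 4 → ℤ) (k : Fin 4) :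
    ∑ t, w t * hodgeWedge v w k t = 0 := by
  fin_cases k <;> simp [hodgeWedge, Fin.sum_univ_four, wedge] <;> ring

theorem sum_hodgeWedge_sq (v w : Fin 4 → ℤ) :
    ∑ i, ∑ j, hodgeWedge v w i j ^ 2 = ∑ i, ∑ j, wedge v w i j ^ 2 := by
  simp [hodgeWedge, Fin.sum_univ_four, wedge]
  ring

/-- A common divisor of the entries of the Hodge dual divides all Plücker coordinates. -/
theorem dvd_wedge_of_dvd_hodgeWedge {v w : Fin 4 → ℤ} {c : ℤ}
    (h : ∀ i j, c ∣ hodgeWedge v w i j) (i j : Fin 4) : c ∣ wedge v w i j := by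
  have h01 : c ∣ wedge v w 0 1 := h 2 3
  have h02 : c ∣ wedge v w 0 2 := h 3 1
  have h03 : c ∣ wedge v w 0 3 := h 1 2
  have h12 : c ∣ wedge v w 1 2 := h 0 3
  have h13 : c ∣ wedge v w 1 3 := h 2 0
  have h23 : c ∣ wedge v w 2 3 := h 0 1
  have hanti (a b : Fin 4) (hab : c ∣ wedge v w a b) : c ∣ wedge v w b a := by
    have : wedge v w b a = -wedge v w a b := by simp only [wedge]; ring
    rw [this]
    exact hab.neg_right
  have hself (a : Fin 4) : c ∣ wedge v w a a := by simp [wedge]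
  fin_cases i <;> fin_cases j <;> first | exact hself _ | assumption | (apply hanti; assumption)

/-- An antisymmetric matrix whose rows lie in the lattice orthogonal to `v₁, v₂` is an integer
multiple of `w₁ ∧ w₂`, for any basis `w₁, w₂` of that lattice. -/
theorem exists_eq_mul_wedge {ι : Type*} [Fintype ι] {v₁ v₂ w₁ w₂ : ι → ℤ}
    (hind : ∀ x y : ℤ, (∀ l, x * w₁ l + y * w₂ l = 0) → x = 0 ∧ y = 0)
    (hspan : ∀ u : ι → ℤ, ∑ t, v₁ t * u t = 0 → ∑ t, v₂ t * u t = 0 →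
      ∃ a b : ℤ, ∀ l, u l = a * w₁ l + b * w₂ l)
    {M : Matrix ι ι ℤ} (hM : ∀ k l, M k l = -M l k)
    (h₁ : ∀ k, ∑ t, v₁ t * M k t = 0) (h₂ : ∀ k, ∑ t, v₂ t * M k t = 0) :
    ∃ c : ℤ, ∀ k l, M k l = c * wedge w₁ w₂ k l := by
  choose a b hab using fun k => hspan (M k) (h₁ k) (h₂ k)
  have hcoeff (v : ι → ℤ) (hv : ∀ k, ∑ t, v t * M k t = 0) :
      ∑ t, v t * a t = 0 ∧ ∑ t, v t * b t = 0 := by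
    apply hind
    intro l
    have h := hv l
    rw [Finset.sum_mul, Finset.sum_mul, ← Finset.sum_add_distrib, ← neg_eq_zero, ← h,
      ← Finset.sum_neg_distrib]
    refine Finset.sum_congr rfl fun t _ => ?_
    rw [hM l t, hab t l]
    ring
  obtain ⟨ha₁, hb₁⟩ := hcoeff v₁ h₁
  obtain ⟨ha₂, hb₂⟩ := hcoeff v₂ h₂
  obtain ⟨α, β, ha⟩ := hspan a ha₁ ha₂
  obtain ⟨γ, δ, hb⟩ := hspan b hb₁ hb₂
  have hrow (k : ι) : 2 * α * w₁ k + (β + γ) * w₂ k = 0 ∧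
      (β + γ) * w₁ k + 2 * δ * w₂ k = 0 := by
    apply hind
    intro l
    have h := hM k l
    rw [hab k l, hab l k, ha k, ha l, hb k, hb l] at h
    linear_combination h
  have hα := hind _ _ fun k => (hrow k).1
  have hδ := hind _ _ fun k => (hrow k).2
  have hα0 : α = 0 := by linarith [hα.1]
  have hδ0 : δ = 0 := by linarith [hδ.2]
  have hβ : β = -γ := by linarith [hα.2]
  refine ⟨γ, fun k l => ?_⟩
  rw [hab k l, ha k, hb k, hα0, hδ0, hβ, wedge]
  ring

/-- If all Plücker coordinates are divisible by `p` and their squares over ordered pairs sum to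
`2 * p ^ 2`, then the pair is supported on at most two coordinates. -/
theorem card_support_le_two_of_dvd_wedge {ι : Type*} [Fintype ι] [DecidableEq ι]
    {v w : ι → ℤ} {p : ℤ} (hp : p ≠ 0) (hdvd : ∀ i j, p ∣ wedge v w i j)
    (hsum : ∑ i, ∑ j, wedge v w i j ^ 2 = 2 * p ^ 2) :
    (Finset.univ.filter fun i => v i ≠ 0 ∨ w i ≠ 0).card ≤ 2 := by
  have hp2 : 0 < p ^ 2 := by positivity
  obtain ⟨i, j, hij⟩ : ∃ i j, wedge v w i j ≠ 0 := by
    by_contra! h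
    simp [h] at hsum
    exact hp hsum
  have hanti (a b : ι) : wedge v w b a = -wedge v w a b := by simp only [wedge]; ring
  have hne : i ≠ j := by
    rintro rfl
    exact hij (by simp [wedge])
  have hlarge : p ^ 2 ≤ wedge v w i j ^ 2 :=
    Int.le_of_dvd (by positivity) (pow_dvd_pow_of_dvd (hdvd i j) 2)
  have hzero (x y : ι) (hxy : (x, y) ≠ (i, j)) (hyx : (x, y) ≠ (j, i)) : wedge v w x y = 0 := by
    rw [← Fintype.sum_prod_type' (f := fun a b => wedge v w a b ^ 2)] at hsum
    have hle := Finset.sum_le_sum_of_subset_of_nonneg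
      (Finset.subset_univ ({(x, y), (i, j), (j, i)} : Finset (ι × ι)))
      (f := fun a => wedge v w a.1 a.2 ^ 2) (fun a _ _ => sq_nonneg _)
    rw [hsum, Finset.sum_insert (by simp [hxy, hyx]), Finset.sum_pair (by simp [hne])] at hle
    simp only [hanti i j, neg_sq] at hle
    exact pow_eq_zero_iff two_ne_zero |>.1 (le_antisymm (by linarith) (sq_nonneg _))
  refine (Finset.card_le_card (t := {i, j}) fun k hk => ?_).trans Finset.card_le_two
  by_contra hkij
  simp only [Finset.mem_insert, Finset.mem_singleton, not_or] at hkij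
  have hik := hzero i k (by simp [hkij.2]) (by simp [hne])
  have hjk := hzero j k (by simp [hne.symm]) (by simp [hkij.1])
  have hv : v k = 0 := (mul_eq_zero.1 (show v k * wedge v w i j = 0 by
    simp only [wedge] at hik hjk ⊢
    linear_combination v j * hik - v i * hjk)).resolve_right hij
  have hw : w k = 0 := (mul_eq_zero.1 (show w k * wedge v w i j = 0 by
    simp only [wedge] at hik hjk ⊢
    linear_combination w j * hik - w i * hjk)).resolve_right hij
  simp [hv, hw] at hk

/-- For a two-vector p-orthonormal system in ℤ⁴ (p prime) with support of size
greater than 2, the Gram determinant of any ℤ-basis {w₁, w₂} of the orthogonal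
lattice equals p². -/
theorem gram_det_eq_p_sq
    (p : ℕ) (hp : p.Prime) (v₁ v₂ : Fin 4 → ℤ)
    (hn1 : ∑ t, v₁ t * v₁ t = (p : ℤ)) (hn2 : ∑ t, v₂ t * v₂ t = (p : ℤ))
    (ho : ∑ t, v₁ t * v₂ t = 0)
    (hsupp : 2 < (Finset.univ.filter (fun i : Fin 4 => v₁ i ≠ 0 ∨ v₂ i ≠ 0)).card)
    (w₁ w₂ : Fin 4 → ℤ)
    (hw₁ : (∑ t, v₁ t * w₁ t = 0) ∧ (∑ t, v₂ t * w₁ t = 0))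
    (hw₂ : (∑ t, v₁ t * w₂ t = 0) ∧ (∑ t, v₂ t * w₂ t = 0))
    (hbasis : ∀ u : Fin 4 → ℤ,
      ((∑ t, v₁ t * u t = 0) ∧ (∑ t, v₂ t * u t = 0)) →
      ∃! ab : ℤ × ℤ, u = ab.1 • w₁ + ab.2 • w₂) :
    (∑ t, w₁ t * w₁ t) * (∑ t, w₂ t * w₂ t) - (∑ t, w₁ t * w₂ t) ^ 2 = (p : ℤ) ^ 2 := by
  have hind : ∀ x y : ℤ, (∀ l, x * w₁ l + y * w₂ l = 0) → x = 0 ∧ y = 0 := by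
    intro x y hxy
    have h := (hbasis 0 (by simp)).unique (y₁ := (x, y)) (y₂ := (0, 0))
      (by ext l; simp [hxy l]) (by simp)
    simpa using h
  have hspan : ∀ u : Fin 4 → ℤ, ∑ t, v₁ t * u t = 0 → ∑ t, v₂ t * u t = 0 →
      ∃ a b : ℤ, ∀ l, u l = a * w₁ l + b * w₂ l := by
    intro u h₁ h₂
    obtain ⟨ab, hab, -⟩ := hbasis u ⟨h₁, h₂⟩
    exact ⟨ab.1, ab.2, fun l => by simpa using congrFun hab l⟩
  obtain ⟨c, hc⟩ := exists_eq_mul_wedge hind hspan (hodgeWedge_antisymm v₁ v₂)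
    (sum_mul_hodgeWedge_left v₁ v₂) (sum_mul_hodgeWedge_right v₁ v₂)
  have hv := sum_wedge_sq v₁ v₂
  rw [hn1, hn2, ho] at hv
  have hmul := sum_hodgeWedge_sq v₁ v₂
  simp only [hc, mul_pow, ← Finset.mul_sum] at hmul
  rw [hv, sum_wedge_sq w₁ w₂] at hmul
  set G := (∑ t, w₁ t * w₁ t) * (∑ t, w₂ t * w₂ t) - (∑ t, w₁ t * w₂ t) ^ 2
  have hG : c ^ 2 * G = (p : ℤ) ^ 2 := by linarith
  have hcp : c ∣ (p : ℤ) := (Int.pow_dvd_pow_iff two_ne_zero).1 ⟨G, hG.symm⟩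
  rcases (Nat.dvd_prime hp).1 (Int.natAbs_dvd_natAbs.2 hcp) with h | h
  · have hc1 : c ^ 2 = 1 := by rw [← Int.natAbs_sq, h]; rfl
    rwa [hc1, one_mul] at hG
  · have hpc : (p : ℤ) ∣ c := Int.natCast_dvd.2 h.symm.dvd
    have hle := card_support_le_two_of_dvd_wedge (Nat.cast_ne_zero.2 hp.ne_zero)
      (dvd_wedge_of_dvd_hodgeWedge fun i j => hc i j ▸ hpc.mul_right _)
      (hv.trans (by ring))
    exact absurd hle hsupp.not_ge
end

section
/- Let p be a prime number, let S = {v₁, v₂} be a p-orthonormal system in ℤ⁴ with |supp(S)| > 2, and let {w₁, w₂} be a ℤ-basis of the orthogonal lattice Λ^⊥ = { v ∈ ℤ⁴ : ⟨v₁|v⟩ = ⟨v₂|v⟩ = 0 }. Then p divides every entry of the Gram matrix of {w₁, w₂}: p ∣ N(w₁), p ∣ N(w₂) and p ∣ ⟨w₁|w₂⟩. -/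
/-- If two orthogonal integer vectors of norm `p` have more than two coordinates in their joint
support, then some `2 × 2` minor of the pair is not divisible by `p`. -/
theorem exists_minor_not_dvd {ι : Type*} [Fintype ι] [DecidableEq ι] {p : ℤ} (hp : 0 < p)
    {v w : ι → ℤ} (hv : ∑ t, v t * v t = p) (hw : ∑ t, w t * w t = p)
    (hvw : ∑ t, v t * w t = 0)
    (hsupp : 2 < (Finset.univ.filter (fun i => v i ≠ 0 ∨ w i ≠ 0)).card) :
    ∃ i j, ¬ p ∣ v i * w j - v j * w i := by
  by_contra! h
  have row (i : ι) : ∑ j, (v i * w j - v j * w i) ^ 2 = p * (v i ^ 2 + w i ^ 2) := by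
    calc ∑ j, (v i * w j - v j * w i) ^ 2
        = ∑ j, (v i ^ 2 * (w j * w j) + w i ^ 2 * (v j * v j)
            - 2 * v i * w i * (v j * w j)) := Finset.sum_congr rfl fun j _ => by ring
      _ = v i ^ 2 * p + w i ^ 2 * p - 2 * v i * w i * 0 := by
          rw [Finset.sum_sub_distrib, Finset.sum_add_distrib, ← Finset.mul_sum,
            ← Finset.mul_sum, ← Finset.mul_sum, hv, hw, hvw]
      _ = p * (v i ^ 2 + w i ^ 2) := by ring
  have dvd (i : ι) : p ∣ v i ^ 2 + w i ^ 2 := by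
    have : p * p ∣ p * (v i ^ 2 + w i ^ 2) := by
      rw [← row i, ← pow_two]
      exact Finset.dvd_sum fun j _ => pow_dvd_pow_of_dvd (h i j) 2
    exact Int.dvd_of_mul_dvd_mul_left hp.ne' this
  have total : ∑ i, (v i ^ 2 + w i ^ 2) = 2 * p := by
    simp only [pow_two, Finset.sum_add_distrib, hv, hw]
    ring
  set s := Finset.univ.filter (fun i => v i ≠ 0 ∨ w i ≠ 0) with hs
  have lower : s.card • p ≤ ∑ i ∈ s, (v i ^ 2 + w i ^ 2) := by
    refine Finset.card_nsmul_le_sum _ _ _ fun i hi => Int.le_of_dvd ?_ (dvd i)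
    rcases (Finset.mem_filter.mp hi).2 with h0 | h0 <;> positivity
  have upper : ∑ i ∈ s, (v i ^ 2 + w i ^ 2) ≤ ∑ i, (v i ^ 2 + w i ^ 2) :=
    Finset.sum_le_sum_of_subset_of_nonneg (Finset.subset_univ s) fun i _ _ => by positivity
  have hcard : (2 : ℤ) < s.card := by exact_mod_cast hsupp
  rw [nsmul_eq_mul] at lower
  nlinarith

/-- Two vectors over a field with a nonzero `2 × 2` minor are linearly independent. -/
theorem linearIndependent_pair_of_minor_ne_zero {K ι : Type*} [Field K] {v w : ι → K} {i j : ι}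
    (h : v i * w j - v j * w i ≠ 0) : LinearIndependent K ![v, w] := by
  rw [LinearIndependent.pair_iff]
  intro s t hst
  have hi : s * v i + t * w i = 0 := congrFun hst i
  have hj : s * v j + t * w j = 0 := congrFun hst j
  constructor
  · exact (mul_eq_zero.mp (by linear_combination w j * hi - w i * hj :
      s * (v i * w j - v j * w i) = 0)).resolve_right h
  · exact (mul_eq_zero.mp (by linear_combination v i * hj - v j * hi :
      t * (v i * w j - v j * w i) = 0)).resolve_right h

/-- The orthogonal complement of a totally isotropic plane in `K⁴` is totally isotropic. -/
theorem dotProduct_eq_zero_of_orthogonal_isotropic_plane {K : Type*} [Field K]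
    {v w x y : Fin 4 → K} (hli : LinearIndependent K ![v, w])
    (hvv : v ⬝ᵥ v = 0) (hww : w ⬝ᵥ w = 0) (hvw : v ⬝ᵥ w = 0)
    (hvx : v ⬝ᵥ x = 0) (hwx : w ⬝ᵥ x = 0) (hvy : v ⬝ᵥ y = 0) (hwy : w ⬝ᵥ y = 0) :
    x ⬝ᵥ y = 0 := by
  let M : Matrix (Fin 2) (Fin 4) K := ![v, w]
  have hrank : M.rank = 2 := by simpa using LinearIndependent.rank_matrix (M := M) hli
  have mem_ker {z : Fin 4 → K} (hv : v ⬝ᵥ z = 0) (hw : w ⬝ᵥ z = 0) :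
      z ∈ LinearMap.ker M.mulVecLin := by
    rw [LinearMap.mem_ker, Matrix.mulVecLin_apply]
    ext i
    fin_cases i
    · exact hv
    · exact hw
  have hker : Module.finrank K (LinearMap.ker M.mulVecLin) = 2 := by
    have := LinearMap.finrank_range_add_finrank_ker M.mulVecLin
    rw [← Matrix.rank, hrank, Module.finrank_fin_fun] at this
    omega
  have hspan : Submodule.span K {v, w} = LinearMap.ker M.mulVecLin := by
    refine Submodule.eq_of_le_of_finrank_eq (Submodule.span_le.mpr ?_) ?_
    · rintro z (rfl | rfl)
      · exact mem_ker hvv (by rwa [dotProduct_comm])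
      · exact mem_ker hvw hww
    · rw [hker, ← Matrix.range_cons_cons_empty v w ![], finrank_span_eq_card hli, Fintype.card_fin]
  obtain ⟨a, b, rfl⟩ := Submodule.mem_span_pair.mp (hspan ▸ mem_ker hvx hwx)
  simp [add_dotProduct, smul_dotProduct, hvy, hwy]

/-- For a two-vector p-orthonormal system in ℤ⁴ (p prime) with support of size
greater than 2, p divides every entry of the Gram matrix of any ℤ-basis
{w₁, w₂} of the orthogonal lattice. -/
theorem p_divides_gram_matrix
    (p : ℕ) (hp : p.Prime) (v₁ v₂ : Fin 4 → ℤ)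
    (hn1 : ∑ t, v₁ t * v₁ t = (p : ℤ)) (hn2 : ∑ t, v₂ t * v₂ t = (p : ℤ))
    (ho : ∑ t, v₁ t * v₂ t = 0)
    (hsupp : 2 < (Finset.univ.filter (fun i : Fin 4 => v₁ i ≠ 0 ∨ v₂ i ≠ 0)).card)
    (w₁ w₂ : Fin 4 → ℤ)
    (hw₁ : (∑ t, v₁ t * w₁ t = 0) ∧ (∑ t, v₂ t * w₁ t = 0))
    (hw₂ : (∑ t, v₁ t * w₂ t = 0) ∧ (∑ t, v₂ t * w₂ t = 0))
    (hbasis : ∀ u : Fin 4 → ℤ,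
      ((∑ t, v₁ t * u t = 0) ∧ (∑ t, v₂ t * u t = 0)) →
      ∃! ab : ℤ × ℤ, u = ab.1 • w₁ + ab.2 • w₂) :
    ((p : ℤ) ∣ ∑ t, w₁ t * w₁ t) ∧ ((p : ℤ) ∣ ∑ t, w₂ t * w₂ t) ∧
      ((p : ℤ) ∣ ∑ t, w₁ t * w₂ t) := by
  have : Fact p.Prime := ⟨hp⟩
  have cast_dot (a b : Fin 4 → ℤ) :
      ((∑ t, a t * b t : ℤ) : ZMod p) = (fun t => (a t : ZMod p)) ⬝ᵥ (fun t => (b t : ZMod p)) := by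
    simp [dotProduct]
  have dot_zero {a b : Fin 4 → ℤ} (h : (p : ℤ) ∣ ∑ t, a t * b t) :
      (fun t => (a t : ZMod p)) ⬝ᵥ (fun t => (b t : ZMod p)) = 0 := by
    rw [← cast_dot, ZMod.intCast_zmod_eq_zero_iff_dvd]
    exact h
  obtain ⟨i, j, hij⟩ :=
    exists_minor_not_dvd (by exact_mod_cast hp.pos : (0 : ℤ) < p) hn1 hn2 ho hsupp
  have hli : LinearIndependent (ZMod p) ![fun t => (v₁ t : ZMod p), fun t => (v₂ t : ZMod p)] := by
    refine linearIndependent_pair_of_minor_ne_zero (i := i) (j := j) ?_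
    rw [← ZMod.intCast_zmod_eq_zero_iff_dvd] at hij
    exact_mod_cast hij
  have key {x y : Fin 4 → ℤ} (hx : (∑ t, v₁ t * x t = 0) ∧ (∑ t, v₂ t * x t = 0))
      (hy : (∑ t, v₁ t * y t = 0) ∧ (∑ t, v₂ t * y t = 0)) : (p : ℤ) ∣ ∑ t, x t * y t := by
    rw [← ZMod.intCast_zmod_eq_zero_iff_dvd, cast_dot]
    exact dotProduct_eq_zero_of_orthogonal_isotropic_plane hli
      (dot_zero hn1.symm.dvd) (dot_zero hn2.symm.dvd) (dot_zero (by simp [ho]))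
      (dot_zero (by simp [hx.1])) (dot_zero (by simp [hx.2]))
      (dot_zero (by simp [hy.1])) (dot_zero (by simp [hy.2]))
  exact ⟨key hw₁ hw₁, key hw₂ hw₂, key hw₁ hw₂⟩
end

section
/- Let n ≥ 1 and let v₁,…,v_k ∈ ℤⁿ (0 ≤ k < n) be linearly independent vectors that are pairwise orthogonal with respect to the standard dot product (⟨vᵢ|vⱼ⟩ = 0 for all i ≠ j). Then there exist vectors v_{k+1},…,v_n ∈ ℤⁿ such that v₁,…,v_n are linearly independent and pairwise orthogonal, i.e. every orthogonal system in ℤⁿ can be extended to an orthogonal base. -/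
/-- Nonzero pairwise orthogonal integer vectors are linearly independent. -/
theorem linearIndependent_of_dotProduct_eq_zero {ι κ : Type*} [Fintype ι] [Fintype κ]
    {w : ι → κ → ℤ} (hne : ∀ i, w i ≠ 0) (horth : ∀ i j, i ≠ j → w i ⬝ᵥ w j = 0) :
    LinearIndependent ℤ w := by
  rw [Fintype.linearIndependent_iff]
  intro g hg i
  have h : (∑ j, g j • w j) ⬝ᵥ w i = g i * (w i ⬝ᵥ w i) := by
    simp only [sum_dotProduct, smul_dotProduct, smul_eq_mul]
    refine Finset.sum_eq_single i (fun j _ hj => ?_) (by simp)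
    rw [horth j i hj, mul_zero]
  rw [hg, zero_dotProduct] at h
  exact (mul_eq_zero.mp h.symm).resolve_right (mt dotProduct_self_eq_zero.mp (hne i))

/-- Fewer than `n` integer vectors in `ℤⁿ` have a common nonzero orthogonal vector. -/
theorem exists_ne_zero_forall_dotProduct_eq_zero {m n : ℕ} (hmn : m < n) (w : Fin m → Fin n → ℤ) :
    ∃ x : Fin n → ℤ, x ≠ 0 ∧ ∀ i, w i ⬝ᵥ x = 0 := by
  have hker : LinearMap.ker (Matrix.of w).mulVecLin ≠ ⊥ := fun h =>
    hmn.not_ge (le_of_fin_injective ℤ _ (LinearMap.ker_eq_bot.mp h))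
  obtain ⟨x, hx, hx0⟩ := Submodule.exists_mem_ne_zero_of_ne_bot hker
  exact ⟨x, hx0, fun i => congrFun (LinearMap.mem_ker.mp hx) i⟩

/-- A system of `k` nonzero pairwise orthogonal vectors in `ℤⁿ` extends to one of any size `m`
with `k ≤ m ≤ n`. -/
theorem exists_orthogonal_extension {n k m : ℕ} (hkm : k ≤ m) (hmn : m ≤ n)
    (v : Fin k → Fin n → ℤ) (hne : ∀ i, v i ≠ 0) (horth : ∀ i j, i ≠ j → v i ⬝ᵥ v j = 0) :
    ∃ w : Fin m → Fin n → ℤ, (∀ i, w (Fin.castLE hkm i) = v i) ∧ (∀ i, w i ≠ 0) ∧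
      ∀ i j, i ≠ j → w i ⬝ᵥ w j = 0 := by
  induction m, hkm using Nat.le_induction with
  | base => exact ⟨v, fun _ => rfl, hne, horth⟩
  | succ m hkm ih =>
    obtain ⟨w, hwv, hw0, hw⟩ := ih (by omega)
    obtain ⟨x, hx0, hx⟩ := exists_ne_zero_forall_dotProduct_eq_zero hmn w
    refine ⟨Fin.snoc (α := fun _ => Fin n → ℤ) w x, fun i => ?_, fun i => ?_, fun i j hij => ?_⟩
    · rw [← hwv i]
      exact Fin.snoc_castSucc (α := fun _ => Fin n → ℤ) x w (Fin.castLE hkm i)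
    · induction i using Fin.lastCases <;> simp [hx0, hw0]
    · induction i using Fin.lastCases <;> induction j using Fin.lastCases
      · exact absurd rfl hij
      · simpa [dotProduct_comm x] using hx _
      · simpa using hx _
      · simpa using hw _ _ (by simpa using hij)

/-- Every orthogonal system of k < n linearly independent pairwise orthogonal
vectors in ℤⁿ can be extended to an orthogonal base of n vectors. -/
theorem orthogonal_system_extends_to_base
    (n : ℕ) (hn : 1 ≤ n) (k : ℕ) (hk : k < n)
    (v : Fin k → (Fin n → ℤ))
    (hli : LinearIndependent ℤ v)
    (horth : ∀ i j, i ≠ j → ∑ t, v i t * v j t = 0) :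
    ∃ w : Fin n → (Fin n → ℤ),
      (∀ i : Fin k, w (Fin.castLE hk.le i) = v i) ∧
      LinearIndependent ℤ w ∧
      (∀ i j, i ≠ j → ∑ t, w i t * w j t = 0) := by
  obtain ⟨w, hwv, hw0, hw⟩ := exists_orthogonal_extension hk.le le_rfl v hli.ne_zero horth
  exact ⟨w, hwv, linearIndependent_of_dotProduct_eq_zero hw0 hw, hw⟩
end

section
/- Let n ≥ 1 and let p ≥ 1 be an integer which is not a perfect square. Suppose v₁,…,v_n ∈ ℤⁿ form a p-orthonormal base of ℤⁿ (N(vⱼ) = p for all j and ⟨v_h|vⱼ⟩ = 0 for h ≠ j). For 1 ≤ j ≤ n let w_j = (v_{j,1},…,v_{j,n},0) ∈ ℤ^{n+1}. Then {w₁,…,w_n} is a p-orthonormal system in ℤ^{n+1} which cannot be extended: there is no w ∈ ℤ^{n+1} with N(w) = p and ⟨w_j|w⟩ = 0 for all 1 ≤ j ≤ n. -/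
open Matrix in
/-- A vector orthogonal to every row of a `p`-orthonormal base of `ℤⁿ` vanishes. -/
theorem eq_zero_of_orthogonal_to_base {n : ℕ} {p : ℤ} (hp : p ≠ 0)
    {v : Fin n → Fin n → ℤ} (hnorm : ∀ j, ∑ i, v j i * v j i = p)
    (horth : ∀ h j, h ≠ j → ∑ i, v h i * v j i = 0)
    {x : Fin n → ℤ} (hx : ∀ j, ∑ i, v j i * x i = 0) : x = 0 := by
  have hmul : Matrix.of v * (Matrix.of v)ᵀ = p • (1 : Matrix (Fin n) (Fin n) ℤ) := by
    ext h j
    rcases eq_or_ne h j with rfl | hne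
    · simpa [Matrix.mul_apply] using hnorm h
    · simpa [Matrix.mul_apply, Matrix.one_apply_ne hne] using horth h j hne
  have hdet : (Matrix.of v).det ≠ 0 := by
    intro h0
    have h := congrArg Matrix.det hmul
    rw [Matrix.det_mul, h0, zero_mul, Matrix.det_smul, Matrix.det_one, mul_one] at h
    exact pow_ne_zero _ hp h.symm
  exact Matrix.eq_zero_of_mulVec_eq_zero hdet (funext hx)

/-- If p ≥ 1 is not a perfect square and v₁,…,v_n is a p-orthonormal base of
ℤⁿ, then appending a zero coordinate to each vector yields a p-orthonormal
system in ℤ^{n+1} that cannot be extended by a vector of norm p orthogonal to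
all of them. -/
theorem padded_base_not_extendable
    (n : ℕ) (hn : 1 ≤ n) (p : ℕ) (hp : 1 ≤ p) (hnsq : ¬ IsSquare p)
    (v : Fin n → (Fin n → ℤ))
    (hnorm : ∀ j, ∑ i, v j i * v j i = (p : ℤ))
    (horth : ∀ h j, h ≠ j → ∑ i, v h i * v j i = 0)
    (w : Fin n → (Fin (n + 1) → ℤ))
    (hw : ∀ j, w j = Fin.snoc (v j) 0) :
    (∀ j, ∑ i, w j i * w j i = (p : ℤ)) ∧
    (∀ h j, h ≠ j → ∑ i, w h i * w j i = 0) ∧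
    ¬ ∃ u : Fin (n + 1) → ℤ,
      (∑ i, u i * u i = (p : ℤ)) ∧ ∀ j, ∑ i, w j i * u i = 0 := by
  have hsum (j : Fin n) (u : Fin (n + 1) → ℤ) :
      ∑ i, w j i * u i = ∑ i, v j i * u i.castSucc := by
    simp [Fin.sum_univ_castSucc, hw]
  refine ⟨fun j => ?_, fun h j hne => ?_, ?_⟩
  · rw [hsum, ← hnorm j]
    simp [hw]
  · rw [hsum, ← horth h j hne]
    simp [hw]
  · rintro ⟨u, hu, horthu⟩
    have hzero : (fun i : Fin n => u i.castSucc) = 0 :=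
      eq_zero_of_orthogonal_to_base (by exact_mod_cast (by lia : p ≠ 0)) hnorm horth
        fun j => (hsum j u).symm.trans (horthu j)
    have hinit (i : Fin n) : u i.castSucc = 0 := congrFun hzero i
    have hlast : u (Fin.last n) * u (Fin.last n) = (p : ℤ) := by
      simpa [Fin.sum_univ_castSucc, hinit] using hu
    exact hnsq ⟨(u (Fin.last n)).natAbs, by
      rw [← Int.natAbs_mul, hlast, Int.natAbs_natCast]⟩
end

section
/- Let n̄ and p̄ be odd positive integers, and set n = n̄² and p = n·p̄². Then the one-vector p-orthonormal system S = {v₁} in ℤⁿ with v₁ = (p̄, p̄, …, p̄) cannot be extended: there is no vector v₂ ∈ ℤⁿ with N(v₂) = p and ⟨v₁|v₂⟩ = 0. (Indeed, N(v₂) = p odd would force v₂ to have an odd number of odd coordinates, while ⟨v₁|v₂⟩ = 0 forces an even number of odd coordinates.) -/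
/-- The sum of squares of a family of integers has the same parity as its sum. -/
theorem two_dvd_sum_mul_self_sub_sum {ι : Type*} [Fintype ι] (v : ι → ℤ) :
    (2 : ℤ) ∣ ∑ i, v i * v i - ∑ i, v i := by
  rw [← Finset.sum_sub_distrib]
  refine Finset.dvd_sum fun i _ => ?_
  rw [← mul_sub_one]
  exact (Int.even_mul_pred_self (v i)).two_dvd

/-- If n̄ and p̄ are odd positive integers, n = n̄² and p = n·p̄², then the
one-vector p-orthonormal system {(p̄,…,p̄)} in ℤⁿ cannot be extended: there is
no v₂ ∈ ℤⁿ with N(v₂) = p orthogonal to (p̄,…,p̄). -/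
theorem all_ones_system_not_extendable
    (nb pb : ℕ) (hnb : Odd nb) (hnb0 : 0 < nb) (hpb : Odd pb) (hpb0 : 0 < pb) :
    ¬ ∃ v₂ : Fin (nb ^ 2) → ℤ,
      (∑ i, v₂ i * v₂ i = ((nb ^ 2 * pb ^ 2 : ℕ) : ℤ)) ∧
      (∑ i, (pb : ℤ) * v₂ i = 0) := by
  rintro ⟨v, hnorm, horth⟩
  have hsum : ∑ i, v i = 0 := by
    rw [← Finset.mul_sum] at horth
    exact (mul_eq_zero.mp horth).resolve_left (by exact_mod_cast hpb0.ne')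
  have hdvd := two_dvd_sum_mul_self_sub_sum v
  rw [hnorm, hsum, sub_zero] at hdvd
  have hodd : Odd (nb ^ 2 * pb ^ 2) := hnb.pow.mul hpb.pow
  exact hodd.not_two_dvd_nat (by exact_mod_cast hdvd)
end
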